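/- arXiv:2605.27312 — 2 statements merged into one kernel-verified Lean document; each statement's English description precedes it below -/
import Mathlib

section
/- Let n ≥ 3 and m ≥ 1 be integers. For 1 ≤ r ≤ m−1, the automorphism group of the dual Berman code DB_n(r,m) (equivalently, of the Berman code B_n(r,m)) equals the wreath product S_n ≀ S_m in its product action on the coordinate set [n]^m. For r ∈ {0, m}, the automorphism group of DB_n(r,m) (equivalently, of B_n(r,m)) equals the full symmetric group S_{n^m}. -/
open Matrix

/-- The automorphism group of a binary code of length `|I|` (as a set of coordinate
permutations): those permutations of the index set that map the code onto itself. -/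
def codeAut {I : Type} (C : Set (I → ZMod 2)) : Set (Equiv.Perm I) :=
  { π | (fun c => c ∘ ⇑π.symm) '' C = C }

/-- The wreath product `S_α ≀ S_m` in its product action on `[α]^m`, realized as the
set of permutations of `Fin m → α` of the form `x ↦ (k ↦ σ_k (x (π⁻¹ k)))`. -/
def wreathPermSet (α : Type) (m : ℕ) : Set (Equiv.Perm (Fin m → α)) :=
  { f | ∃ (σ : Fin m → Equiv.Perm α) (π : Equiv.Perm (Fin m)),
      ∀ (x : Fin m → α) (k : Fin m), f x k = σ k (x (π⁻¹ k)) }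

/-- The dual Berman code `DB_n(r, m)`, defined recursively.  Coordinates are indexed by
`[n]^m = (Fin m → Fin n)`; the first coordinate of the index is the block index of the
concatenation `(u + u_0 | u + u_1 | … | u + u_{n-2} | u)`. -/
def bermanDual (n : ℕ) : (m : ℕ) → ℕ → Set ((Fin m → Fin n) → ZMod 2)
  | 0, _ => Set.univ
  | m + 1, 0 => { c | ∃ x : ZMod 2, ∀ v, c v = x }
  | m + 1, r + 1 =>
      if m + 1 ≤ r + 1 then Set.univ
      else
        { c | ∃ (u : (Fin m → Fin n) → ZMod 2)
                (w : Fin n → (Fin m → Fin n) → ZMod 2),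
            u ∈ bermanDual n m (r + 1) ∧
            (∀ l : Fin n, (l : ℕ) < n - 1 → w l ∈ bermanDual n m r) ∧
            (∀ l : Fin n, (l : ℕ) = n - 1 → w l = 0) ∧
            ∀ v : Fin (m + 1) → Fin n,
              c v = u (fun k => v k.succ) + w (v 0) (fun k => v k.succ) }

/-- The dual of a binary code. -/
def dualCode {I : Type} [Fintype I] (C : Set (I → ZMod 2)) : Set (I → ZMod 2) :=
  { c | ∀ d ∈ C, ∑ i, c i * d i = 0 }

/-- The Berman code `B_n(r, m)` is the dual code of the dual Berman code `DB_n(r, m)`. -/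
def berman (n m r : ℕ) : Set ((Fin m → Fin n) → ZMod 2) :=
  dualCode (bermanDual n m r)

open Function

/-- Hamming adjacency. -/
def HAdj {α : Type} {m : ℕ} (x y : Fin m → α) : Prop :=
  ∃ i, x i ≠ y i ∧ ∀ j, j ≠ i → x j = y j

lemma eq_of_update_invariant {α β : Type} {m : ℕ} (s : Set (Fin m)) (g : (Fin m → α) → β)
    (h : ∀ x j b, j ∉ s → g (update x j b) = g x) (x y : Fin m → α)
    (hxy : ∀ i ∈ s, x i = y i) : g x = g y := by
  classical
  have key : ∀ T : Finset (Fin m), g (T.piecewise y x) = g x := by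
    intro T
    induction T using Finset.induction_on with
    | empty => simp
    | insert j T hj ih =>
      rw [Finset.piecewise_insert]
      by_cases hjs : j ∈ s
      · have : update (T.piecewise y x) j (y j) = T.piecewise y x := by
          rw [← hxy j hjs]
          have : T.piecewise y x j = x j := by simp [hj]
          rw [← this, update_eq_self]
        rw [this, ih]
      · rw [h _ _ _ hjs, ih]
  have := key Finset.univ
  simpa using this.symm

lemma wreath_of_adj {α : Type} [Nontrivial α] [Finite α] {m : ℕ}
    (f : Equiv.Perm (Fin m → α)) (hf : ∀ x y, HAdj x y ↔ HAdj (f x) (f y)) :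
    f ∈ wreathPermSet α m := by
  classical
  have adjU : ∀ (x : Fin m → α) i a, a ≠ x i → HAdj x (update x i a) := by
    intro x i a ha
    refine ⟨i, by simpa using ha.symm, fun j hj => by simp [hj]⟩
  have dir : ∀ (x : Fin m → α) i, ∃ k, ∀ a, ∀ j, j ≠ k → f (update x i a) j = f x j := by
    intro x i
    obtain ⟨a0, ha0⟩ := exists_ne (x i)
    obtain ⟨k, hk, hk'⟩ := (hf _ _).1 (adjU x i a0 ha0)
    refine ⟨k, fun a j hj => ?_⟩
    by_cases h1 : a = x i
    · subst h1; rw [update_eq_self]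
    by_cases h2 : a = a0
    · subst h2; exact (hk' j hj).symm
    obtain ⟨k1, hk1, hk1'⟩ := (hf _ _).1 (adjU x i a h1)
    have h3 : HAdj (update x i a) (update x i a0) := by
      have := adjU (update x i a) i a0 (by simpa using Ne.symm h2)
      simpa using this
    obtain ⟨k2, hk2, hk2'⟩ := (hf _ _).1 h3
    by_cases hkk : k1 = k
    · subst hkk; exact (hk1' j hj).symm
    exfalso
    have e1 := hk' k1 hkk
    have e2 := hk1' k (Ne.symm hkk)
    by_cases c1 : k1 = k2
    · have := hk2' k (by rw [← c1]; exact Ne.symm hkk)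
      exact hk (e2.trans this)
    · have := hk2' k1 c1
      exact hk1 (e1.trans this.symm)
  choose τ hτ using dir
  have hne : ∀ x i a, a ≠ x i → f (update x i a) (τ x i) ≠ f x (τ x i) := by
    intro x i a ha h
    have : f (update x i a) = f x := by
      funext j
      by_cases hj : j = τ x i
      · subst hj; exact h
      · exact hτ x i a j hj
    have := congrFun (f.injective this) i
    simp at this
    exact ha this
  have hinj : ∀ x, Injective (τ x) := by
    intro x i j hij
    by_contra hne'
    obtain ⟨a, ha⟩ := exists_ne (x i)
    obtain ⟨b, hb⟩ := exists_ne (x j)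
    have hji : j ≠ i := Ne.symm hne'
    have hd : HAdj (f (update x i a)) (f (update x j b)) := by
      refine ⟨τ x i, ?_, ?_⟩
      · intro h
        have : f (update x i a) = f (update x j b) := by
          funext k
          by_cases hk : k = τ x i
          · subst hk; exact h
          · rw [hτ x i a k hk, hτ x j b k (by rw [← hij]; exact hk)]
        have := congrFun (f.injective this) i
        simp [hne'] at this
        exact ha this
      · intro k hk
        rw [hτ x i a k hk, hτ x j b k (by rw [← hij]; exact hk)]
    obtain ⟨k, hk, hk'⟩ := (hf _ _).2 hd
    by_cases c : k = i
    · have := hk' j (by rw [c]; exact hji)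
      simp [hji] at this
      exact hb this.symm
    · have := hk' i (Ne.symm c)
      simp [hne'] at this
      exact ha this
  have hconst : ∀ x j b, τ (update x j b) = τ x := by
    intro x j b
    by_cases hb : b = x j
    · subst hb; rw [update_eq_self]
    funext i
    by_cases hij : i = j
    · subst hij
      by_contra hc
      have h1 := hne x i b hb
      have h2 := hτ (update x i b) i (x i) (τ x i) (Ne.symm hc)
      simp at h2
      exact h1 h2.symm
    obtain ⟨a, ha⟩ := exists_ne (x i)
    have hst : τ x i ≠ τ x j := fun h => hij (hinj x h)
    have hji : j ≠ i := Ne.symm hij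
    have hcomm : update (update x j b) i a = update (update x i a) j b :=
      update_comm hji b a x
    by_contra hu
    have a1 := hτ (update x j b) i a (τ x i) (Ne.symm hu)
    have a2 := hτ x j b (τ x i) hst
    have a3 := hne x i a ha
    have v : τ (update x i a) j = τ x i := by
      by_contra hv
      have := hτ (update x i a) j b (τ x i) (Ne.symm hv)
      rw [← hcomm, a1, a2] at this
      exact a3 this.symm
    have b1 := hτ (update x i a) j b (τ x j) (by rw [v]; exact hst.symm)
    have b2 := hτ x i a (τ x j) hst.symm
    have b3 := hne x j b hb
    have u : τ (update x j b) i = τ x j := by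
      by_contra hv
      have := hτ (update x j b) i a (τ x j) (Ne.symm hv)
      rw [hcomm, b1, b2] at this
      exact b3 this.symm
    have : f (update (update x j b) i a) = f x := by
      funext k
      by_cases hk : k = τ x j
      · subst hk; rw [hcomm, b1, b2]
      · rw [hτ (update x j b) i a k (by rw [u]; exact hk), hτ x j b k hk]
    have := congrFun (f.injective this) i
    simp at this
    exact ha this
  have hτc : ∀ x y, τ x = τ y := fun x y =>
    eq_of_update_invariant ∅ τ (fun x j b _ => hconst x j b) x y (by simp)
  obtain ⟨a0⟩ : Nonempty α := inferInstance
  let x0 : Fin m → α := fun _ => a0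
  let π : Equiv.Perm (Fin m) := Equiv.ofBijective (τ x0)
    (Finite.injective_iff_bijective.1 (hinj x0))
  have hπ : ∀ k, τ x0 (π⁻¹ k) = k := fun k => π.apply_symm_apply k
  have sinj : ∀ k, Injective (fun a => f (update x0 (π⁻¹ k) a) k) := by
    intro k a b hab
    by_contra hc
    have := hne (update x0 (π⁻¹ k) a) (π⁻¹ k) b (by simpa using Ne.symm hc)
    rw [hτc _ x0, hπ] at this
    simp at this
    exact this hab.symm
  refine ⟨fun k => Equiv.ofBijective _ (Finite.injective_iff_bijective.1 (sinj k)), π, ?_⟩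
  intro x k
  simp only [Equiv.ofBijective_apply]
  refine eq_of_update_invariant {π⁻¹ k} (fun x => f x k) ?_ _ _ ?_
  · intro y j b hj
    apply hτ
    rw [hτc y x0]
    intro h
    apply hj
    rw [Set.mem_singleton_iff]
    apply hinj x0
    rw [hπ, h]
  · simp

/-- functions depending only on coordinates in `S` -/
def IsJunta {n m : ℕ} (S : Finset (Fin m)) (g : (Fin m → Fin n) → ZMod 2) : Prop :=
  ∀ x y, (∀ i ∈ S, x i = y i) → g x = g y

/-- span of r-juntas -/
def JC (n m r : ℕ) : Submodule (ZMod 2) ((Fin m → Fin n) → ZMod 2) :=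
  Submodule.span (ZMod 2) { g | ∃ S : Finset (Fin m), S.card ≤ r ∧ IsJunta S g }

lemma JC_mono (n m : ℕ) {r r' : ℕ} (h : r ≤ r') : JC n m r ≤ JC n m r' :=
  Submodule.span_mono (fun _ ⟨S, hS, hg⟩ => ⟨S, hS.trans h, hg⟩)

lemma JC_top (n m r : ℕ) (h : m ≤ r) (g) : g ∈ JC n m r := by
  apply Submodule.subset_span
  refine ⟨Finset.univ, by simpa using h, ?_⟩
  intro x y hxy
  congr 1
  funext i
  exact hxy i (Finset.mem_univ _)

lemma JC_zero (n m : ℕ) (g) : g ∈ JC n m 0 ↔ ∃ c, ∀ v, g v = c := by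
  constructor
  · intro hg
    induction hg using Submodule.span_induction with
    | mem g h =>
      obtain ⟨S, hS, hg⟩ := h
      have hS : S = ∅ := by simpa using hS
      subst hS
      by_cases hne : Nonempty (Fin m → Fin n)
      · obtain ⟨v⟩ := hne
        exact ⟨g v, fun w => hg _ _ (by simp)⟩
      · exact ⟨0, fun v => (hne ⟨v⟩).elim⟩
    | zero => exact ⟨0, fun _ => rfl⟩
    | add a b _ _ ha hb =>
      obtain ⟨c, hc⟩ := ha
      obtain ⟨d, hd⟩ := hb
      exact ⟨c + d, fun v => by simp [hc, hd]⟩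
    | smul t a _ ha =>
      obtain ⟨c, hc⟩ := ha
      exact ⟨t * c, fun v => by simp [hc]⟩
  · rintro ⟨c, hc⟩
    exact Submodule.subset_span ⟨∅, by simp, fun x y _ => by rw [hc, hc]⟩

/-- slice -/
def sl {n m : ℕ} (l : Fin n) (f : (Fin (m+1) → Fin n) → ZMod 2) : (Fin m → Fin n) → ZMod 2 :=
  fun x => f (Fin.cons l x)

lemma sl_junta {n m : ℕ} (l : Fin n) (S : Finset (Fin (m+1))) (g) (hg : IsJunta (n := n) S g) :
    IsJunta (Finset.univ.filter (fun i : Fin m => i.succ ∈ S)) (sl l g) := by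
  intro x y h
  apply hg
  intro i hi
  induction i using Fin.cases with
  | zero => simp
  | succ i => simpa using h i (by simpa using hi)

lemma card_succ_filter {m : ℕ} (S : Finset (Fin (m+1))) :
    (Finset.univ.filter (fun i : Fin m => i.succ ∈ S)).card ≤ (S.erase 0).card := by
  apply Finset.card_le_card_of_injOn Fin.succ
  · intro i hi
    simp at hi ⊢
    exact hi
  · exact (Fin.succ_injective m).injOn

lemma sl_mem {n m r : ℕ} (l : Fin n) {f} (hf : f ∈ JC n (m+1) r) : sl l f ∈ JC n m r := by
  induction hf using Submodule.span_induction with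
  | mem g h =>
    obtain ⟨S, hS, hg⟩ := h
    exact Submodule.subset_span ⟨_, (card_succ_filter S).trans
      ((Finset.card_erase_le).trans hS), sl_junta l S g hg⟩
  | zero => exact Submodule.zero_mem _
  | add a b _ _ ha hb => exact Submodule.add_mem _ ha hb
  | smul t a _ ha => exact Submodule.smul_mem _ t ha

lemma sl_sub_mem {n m r : ℕ} (l l' : Fin n) {f} (hf : f ∈ JC n (m+1) (r+1)) :
    sl l f - sl l' f ∈ JC n m r := by
  induction hf using Submodule.span_induction with
  | mem g h =>
    obtain ⟨S, hS, hg⟩ := h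
    by_cases h0 : (0 : Fin (m+1)) ∈ S
    · have hc := card_succ_filter S
      rw [Finset.card_erase_of_mem h0] at hc
      have hc' := hc.trans (show S.card - 1 ≤ r by omega)
      exact Submodule.sub_mem _ (Submodule.subset_span ⟨_, hc', sl_junta l S g hg⟩)
        (Submodule.subset_span ⟨_, hc', sl_junta l' S g hg⟩)
    · have : sl l g = sl l' g := by
        funext x
        apply hg
        intro i hi
        induction i using Fin.cases with
        | zero => exact (h0 hi).elim
        | succ i => simp
      rw [this, sub_self]
      exact Submodule.zero_mem _
  | zero => 
    have : sl l (0 : (Fin (m+1) → Fin n) → ZMod 2) - sl l' 0 = 0 := by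
      funext x; simp [sl]
    rw [this]; exact Submodule.zero_mem _
  | add a b _ _ ha hb =>
    have : sl l (a + b) - sl l' (a + b) = (sl l a - sl l' a) + (sl l b - sl l' b) := by
      funext x; simp [sl]; ring
    rw [this]; exact Submodule.add_mem _ ha hb
  | smul t a _ ha =>
    have : sl l (t • a) - sl l' (t • a) = t • (sl l a - sl l' a) := by
      funext x; simp [sl]; ring
    rw [this]; exact Submodule.smul_mem _ t ha

lemma tail_mem {n m r : ℕ} {u} (hu : u ∈ JC n m r) :
    (fun v : Fin (m+1) → Fin n => u (fun k => v k.succ)) ∈ JC n (m+1) r := by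
  induction hu using Submodule.span_induction with
  | mem g h =>
    obtain ⟨S, hS, hg⟩ := h
    refine Submodule.subset_span ⟨S.map (Fin.succEmb m), by simpa using hS, ?_⟩
    intro x y hxy
    apply hg
    intro i hi
    exact hxy _ (by simpa using hi)
  | zero => exact Submodule.zero_mem _
  | add a b _ _ ha hb => exact Submodule.add_mem _ ha hb
  | smul t a _ ha => exact Submodule.smul_mem _ t ha

lemma head_mem {n m r : ℕ} (l : Fin n) {u} (hu : u ∈ JC n m r) :
    (fun v : Fin (m+1) → Fin n => if v 0 = l then u (fun k => v k.succ) else 0)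
      ∈ JC n (m+1) (r+1) := by
  induction hu using Submodule.span_induction with
  | mem g h =>
    obtain ⟨S, hS, hg⟩ := h
    refine Submodule.subset_span ⟨insert 0 (S.map (Fin.succEmb m)), ?_, ?_⟩
    · refine (Finset.card_insert_le _ _).trans ?_
      simpa using hS
    intro x y hxy
    have h0 := hxy 0 (by simp)
    have : g (fun k => x k.succ) = g (fun k => y k.succ) := by
      apply hg
      intro i hi
      exact hxy _ (by simp [hi])
    simp only [h0, this]
  | zero =>
    convert Submodule.zero_mem (JC n (m+1) (r+1)) using 1
    funext v; simp
  | add a b _ _ ha hb =>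
    convert Submodule.add_mem _ ha hb using 1
    funext v; simp; split_ifs <;> simp
  | smul t a _ ha =>
    convert Submodule.smul_mem _ t ha using 1
    funext v; simp

lemma bermanDual_eq (n : ℕ) (hn : 0 < n) : ∀ m r, bermanDual n m r = (JC n m r : Set _) := by
  intro m
  induction m with
  | zero =>
    intro r
    ext g
    simp [bermanDual, JC_top n 0 r (Nat.zero_le _) g]
  | succ m ih =>
    intro r
    cases r with
    | zero =>
      ext g
      simp only [bermanDual, Set.mem_ofPred_eq, SetLike.mem_coe, JC_zero]
    | succ r =>
      unfold bermanDual
      split_ifs with h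
      · ext g
        simp [JC_top n (m+1) (r+1) h g]
      · ext c
        simp only [Set.mem_ofPred_eq, SetLike.mem_coe, ih]
        constructor
        · rintro ⟨u, w, hu, hw, hw', hc⟩
          have : c = (fun v : Fin (m+1) → Fin n => u (fun k => v k.succ)) +
              ∑ l : Fin n, (fun v : Fin (m+1) → Fin n =>
                if v 0 = l then w l (fun k => v k.succ) else 0) := by
            funext v
            simp [hc v]
          rw [this]
          refine Submodule.add_mem _ (tail_mem hu) (Submodule.sum_mem _ fun l _ => ?_)
          apply head_mem
          by_cases hl : (l : ℕ) < n - 1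
          · exact hw l hl
          · rw [hw' l (by omega)]
            exact Submodule.zero_mem _
        · intro hc
          let t : Fin n := ⟨n - 1, by omega⟩
          refine ⟨sl t c, fun l => sl l c - sl t c, sl_mem t hc,
            fun l _ => sl_sub_mem l t hc, ?_, ?_⟩
          · intro l hl
            have : l = t := Fin.ext hl
            simp [this]
          · intro v
            have : (Fin.cons (v 0) (fun k => v k.succ) : Fin (m+1) → Fin n) = v :=
              Fin.cons_self_tail v
            simp [sl, this]

/-- weight -/
def wt {n m : ℕ} (f : (Fin m → Fin n) → ZMod 2) : ℕ := (Finset.univ.filter (fun x => f x ≠ 0)).card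

/-- subcube indicator -/
def cube {n m : ℕ} (S : Finset (Fin m)) (a : Fin m → Fin n) : (Fin m → Fin n) → ZMod 2 :=
  fun x => if ∀ i ∈ S, x i = a i then 1 else 0

lemma wt_slice {n m : ℕ} (f : (Fin (m+1) → Fin n) → ZMod 2) : wt f = ∑ l, wt (sl l f) := by
  unfold wt
  simp only [Finset.card_filter]
  rw [← (Fin.consEquiv (fun _ : Fin (m+1) => Fin n)).sum_comp, Fintype.sum_prod_type]
  rfl

lemma wt_cube {n m : ℕ} (S : Finset (Fin m)) (a : Fin m → Fin n) :
    wt (cube S a) = n ^ (m - S.card) := by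
  have : (Finset.univ.filter (fun x => cube S a x ≠ 0)) =
      Fintype.piFinset (fun i => if i ∈ S then {a i} else Finset.univ) := by
    ext x
    rw [Finset.mem_filter, Fintype.mem_piFinset]
    simp only [Finset.mem_univ, true_and]
    unfold cube
    constructor
    · intro h i
      by_cases hi : i ∈ S
      · have h' : ∀ i ∈ S, x i = a i := by
          by_contra hc; simp [hc] at h
        simp [hi, h' i hi]
      · simp [hi]
    · intro h
      have h' : ∀ i ∈ S, x i = a i := by
        intro i hi
        simpa [hi] using h i
      rw [if_pos h']
      exact one_ne_zero
  unfold wt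
  rw [this, Fintype.card_piFinset]
  have : ∀ i, (if i ∈ S then {a i} else (Finset.univ : Finset (Fin n))).card
      = if i ∈ S then 1 else n := by
    intro i; split_ifs <;> simp
  simp only [this]
  rw [Finset.prod_ite]
  simp
  congr 1
  rw [← Finset.compl_filter, Finset.card_compl]
  simp

lemma cube_mem {n m : ℕ} (S : Finset (Fin m)) (a : Fin m → Fin n) :
    cube S a ∈ JC n m S.card := by
  apply Submodule.subset_span
  refine ⟨S, le_rfl, ?_⟩
  intro x y h
  have : (∀ i ∈ S, x i = a i) ↔ (∀ i ∈ S, y i = a i) :=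
    forall₂_congr fun i hi => by rw [h i hi]
  simp only [cube, this]

lemma wt_pos_of_ne {n m : ℕ} {f : (Fin m → Fin n) → ZMod 2} (h : f ≠ 0) : 0 < wt f := by
  obtain ⟨x, hx⟩ := Function.ne_iff.1 h
  exact Finset.card_pos.2 ⟨x, by simpa using hx⟩

lemma wt_zero {n m : ℕ} : wt (0 : (Fin m → Fin n) → ZMod 2) = 0 := by simp [wt]

lemma wt_sub_le {n m : ℕ} (f g : (Fin m → Fin n) → ZMod 2) : wt (f - g) ≤ wt f + wt g := by
  unfold wt
  refine le_trans (Finset.card_le_card ?_) (Finset.card_union_le _ _)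
  intro x hx
  simp at hx ⊢
  by_contra hc
  push Not at hc
  apply hx
  rw [hc.1, hc.2, sub_zero]

lemma min_wt (n : ℕ) (hn : 3 ≤ n) : ∀ m r (f : (Fin m → Fin n) → ZMod 2), r ≤ m → f ∈ JC n m r →
    f ≠ 0 → n ^ (m - r) ≤ wt f ∧ (wt f = n ^ (m - r) → ∃ S a, S.card = r ∧ f = cube S a) := by
  intro m
  induction m with
  | zero =>
    intro r f hr hf h0
    have : r = 0 := by omega
    subst this
    refine ⟨by simpa using Nat.succ_le_of_lt (wt_pos_of_ne h0), fun _ => ⟨∅, Fin.elim0, by simp, ?_⟩⟩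
    obtain ⟨x, hx⟩ := Function.ne_iff.1 h0
    funext y
    rw [Subsingleton.elim y x]
    simp [cube]
    exact Fin.eq_one_of_ne_zero (f x) hx
  | succ m ih =>
    intro r f hr hf h0
    cases r with
    | zero =>
      rw [JC_zero] at hf
      obtain ⟨c, hc⟩ := hf
      have hc1 : c = 1 := by
        apply Fin.eq_one_of_ne_zero
        rintro rfl
        exact h0 (funext hc)
      have : f = cube ∅ (fun _ => ⟨0, by omega⟩) := by
        funext x
        simp [cube, hc, hc1]
      refine ⟨?_, fun _ => ⟨∅, _, by simp, this⟩⟩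
      rw [this, wt_cube]; simp
    | succ r =>
      have hr' : r ≤ m := by omega
      have e : m + 1 - (r + 1) = m - r := by omega
      rw [e]
      have hsl : ∀ l, sl l f ∈ JC n m (r+1) := fun l => sl_mem l hf
      have hsub : ∀ l l', sl l f - sl l' f ∈ JC n m r := fun l l' => sl_sub_mem l l' hf
      by_cases hz : ∃ j, sl j f = 0
      · obtain ⟨j, hj⟩ := hz
        have hm : ∀ l, sl l f ∈ JC n m r := fun l => by
          have := hsub l j
          rwa [hj, sub_zero] at this
        obtain ⟨l, hl⟩ : ∃ l, sl l f ≠ 0 := by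
          by_contra hc
          push Not at hc
          apply h0
          funext v
          have := congrFun (hc (v 0)) (Fin.tail v)
          simpa [sl, Fin.cons_self_tail] using this
        obtain ⟨i1, i2⟩ := ih r (sl l f) hr' (hm l) hl
        have hs : wt f = wt (sl l f) + ∑ k ∈ Finset.univ.erase l, wt (sl k f) := by
          rw [wt_slice]
          exact (Finset.add_sum_erase _ (fun k => wt (sl k f)) (Finset.mem_univ l)).symm
        refine ⟨by omega, fun hw => ?_⟩
        have hs0 : ∑ k ∈ Finset.univ.erase l, wt (sl k f) = 0 := by omega
        obtain ⟨S, a, hS, ha⟩ := i2 (by omega)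
        refine ⟨insert 0 (S.map (Fin.succEmb m)), Fin.cons l a, ?_, ?_⟩
        · rw [Finset.card_insert_of_notMem (by simp), Finset.card_map, hS]
        · funext v
          have hv : f v = sl (v 0) f (Fin.tail v) := by simp [sl, Fin.cons_self_tail]
          by_cases hvl : v 0 = l
          · rw [hv, hvl, ha]
            simp [cube, Fin.tail, hvl]
            rfl
          · have h1 : sl (v 0) f = 0 := by
              by_contra hc
              have h2 := wt_pos_of_ne hc
              have := (Finset.sum_eq_zero_iff.1 hs0) (v 0) (by simp [hvl])
              omega
            rw [hv, h1]
            simp [cube, hvl]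
      · push Not at hz
        have hn0 : 0 < n := by omega
        by_cases hrm : r = m
        · -- the full space: each slice is nonzero
          subst hrm
          have h1 : ∀ l, 1 ≤ wt (sl l f) := fun l => wt_pos_of_ne (hz l)
          have h2 : n ≤ wt f := by
            rw [wt_slice]
            calc n = ∑ l : Fin n, 1 := by simp
              _ ≤ _ := Finset.sum_le_sum fun l _ => h1 l
          simp
          refine ⟨by omega, fun h => by omega⟩
        have hr2 : r + 1 ≤ m := by omega
        have hpow : n ^ (m - r) = n * n ^ (m - (r+1)) := by
          rw [← pow_succ']; congr 1; omega
        have h1 : ∀ l, n ^ (m - (r+1)) ≤ wt (sl l f) := fun l => (ih (r+1) _ hr2 (hsl l) (hz l)).1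
        have hsum : n * n ^ (m - (r+1)) = ∑ l : Fin n, n ^ (m - (r+1)) := by simp
        refine ⟨?_, fun hw => ?_⟩
        · rw [wt_slice, hpow, hsum]
          exact Finset.sum_le_sum fun l _ => h1 l
        · have heq : ∀ l, wt (sl l f) = n ^ (m - (r+1)) := by
            rw [wt_slice, hpow, hsum] at hw
            intro l
            exact ((Finset.sum_eq_sum_iff_of_le (fun l _ => h1 l)).1 hw.symm l
              (Finset.mem_univ l)).symm
          let l0 : Fin n := ⟨0, hn0⟩
          have hall : ∀ l, sl l f = sl l0 f := by
            intro l
            by_contra hc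
            have h3 := (ih r _ hr' (hsub l l0) (sub_ne_zero.2 hc)).1
            have h4 := wt_sub_le (sl l f) (sl l0 f)
            rw [heq, heq] at h4
            have h5 : 0 < n ^ (m - (r+1)) := by positivity
            rw [hpow] at h3
            nlinarith
          obtain ⟨S, a, hS, ha⟩ := (ih (r+1) _ hr2 (hsl l0) (hz l0)).2 (heq l0)
          refine ⟨S.map (Fin.succEmb m), Fin.cons l0 a, by simp [hS], ?_⟩
          funext v
          have hv : f v = sl (v 0) f (Fin.tail v) := by simp [sl, Fin.cons_self_tail]
          rw [hv, hall, ha]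
          simp [cube, Fin.tail]
          rfl

/-- cubes of codimension r -/
def Cubes (n m r : ℕ) : Set ((Fin m → Fin n) → ZMod 2) := { c | ∃ S a, S.card = r ∧ c = cube S a }

lemma mem_Cubes {n m r : ℕ} (hn : 3 ≤ n) (hr : r ≤ m) (c) :
    c ∈ Cubes n m r ↔ c ∈ JC n m r ∧ wt c = n ^ (m - r) := by
  constructor
  · rintro ⟨S, a, rfl, rfl⟩
    exact ⟨cube_mem S a, wt_cube S a⟩
  · rintro ⟨h1, h2⟩
    refine (min_wt n hn m r c hr h1 ?_).2 h2
    rintro rfl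
    rw [wt_zero] at h2
    have : 0 < n ^ (m - r) := by positivity
    omega

lemma wt_comp {n m : ℕ} (f : (Fin m → Fin n) → ZMod 2) (π : Equiv.Perm (Fin m → Fin n)) :
    wt (f ∘ π) = wt f := by
  unfold wt
  simp only [Finset.card_filter]
  exact Equiv.sum_comp π (fun x => if f x ≠ 0 then 1 else 0)

/-- agreement set -/
def agr {n m : ℕ} (x y : Fin m → Fin n) : Finset (Fin m) := Finset.univ.filter fun i => x i = y i

lemma count_cubes {n m r : ℕ} (hn : 3 ≤ n) (x y : Fin m → Fin n) :
    {c ∈ Cubes n m r | c x = 1 ∧ c y = 1}.ncard = (agr x y).card.choose r := by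
  have : Nontrivial (Fin n) := Fin.nontrivial_iff_two_le.2 (by omega)
  have : {c ∈ Cubes n m r | c x = 1 ∧ c y = 1} =
      (fun S => cube S x) '' ((agr x y).powersetCard r : Set (Finset (Fin m))) := by
    ext c
    simp only [Set.mem_ofPred_eq, Set.mem_image, Finset.mem_coe, Finset.mem_powersetCard]
    constructor
    · rintro ⟨⟨S, a, hS, rfl⟩, hx, hy⟩
      have hx' : ∀ i ∈ S, x i = a i := by by_contra hc; simp [cube, hc] at hx
      have hy' : ∀ i ∈ S, y i = a i := by by_contra hc; simp [cube, hc] at hy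
      refine ⟨S, ⟨fun i hi => by simp [agr, hx' i hi, hy' i hi], hS⟩, ?_⟩
      funext z
      have : (∀ i ∈ S, z i = x i) ↔ (∀ i ∈ S, z i = a i) :=
        forall₂_congr fun i hi => by rw [hx' i hi]
      simp only [cube, this]
    · rintro ⟨S, ⟨hS, hc⟩, rfl⟩
      refine ⟨⟨S, x, hc, rfl⟩, by simp [cube], ?_⟩
      have : ∀ i ∈ S, y i = x i := fun i hi => by
        have := hS hi
        simp [agr] at this
        exact this.symm
      simp only [cube, if_pos this]
  rw [this, Set.ncard_image_of_injective, Set.ncard_coe_finset, Finset.card_powersetCard]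
  have sub : ∀ S T : Finset (Fin m), cube S x = cube T x → S ⊆ T := by
    intro S T h i hi
    by_contra hT
    obtain ⟨a, ha⟩ := exists_ne (x i)
    have h1 := congrFun h (update x i a)
    have hTT : ∀ j ∈ T, update x i a j = x j := by
      intro j hj
      have : j ≠ i := by rintro rfl; exact hT hj
      simp [this]
    have hSS : ¬ ∀ j ∈ S, update x i a j = x j := by
      intro hc
      have := hc i hi
      simp at this
      exact ha this
    simp only [cube, if_pos hTT, if_neg hSS] at h1
    exact zero_ne_one h1
  intro S T h
  exact Finset.Subset.antisymm (sub _ _ h) (sub _ _ h.symm)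

lemma hadj_iff {n m : ℕ} (x y : Fin m → Fin n) :
    HAdj x y ↔ (agr x y).card + 1 = m := by
  have hc : (agr x y).card + (agr x y)ᶜ.card = m := by
    simpa using Finset.card_add_card_compl (agr x y)
  have : (agr x y).card + 1 = m ↔ (agr x y)ᶜ.card = 1 := by omega
  rw [this, Finset.card_eq_one]
  constructor
  · rintro ⟨i, hi, h⟩
    refine ⟨i, ?_⟩
    ext j
    simp only [agr, Finset.mem_compl, Finset.mem_filter, Finset.mem_univ, true_and,
      Finset.mem_singleton]
    constructor
    · intro hj
      by_contra hc
      exact hj (h j hc)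
    · rintro rfl; exact hi
  · rintro ⟨i, hi⟩
    refine ⟨i, ?_, ?_⟩
    · have : i ∈ (agr x y)ᶜ := by rw [hi]; simp
      simpa [agr] using this
    · intro j hj
      have : j ∉ (agr x y)ᶜ := by rw [hi]; simpa using hj
      simpa [agr] using this

lemma hadj_iff_count {n m r : ℕ} (hn : 3 ≤ n) (hr : 1 ≤ r) (hr' : r ≤ m - 1) (x y : Fin m → Fin n) :
    HAdj x y ↔ x ≠ y ∧ {c ∈ Cubes n m r | c x = 1 ∧ c y = 1}.ncard = (m-1).choose r := by
  rw [count_cubes hn]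
  constructor
  · intro h
    refine ⟨?_, ?_⟩
    · rintro rfl
      obtain ⟨i, hi, _⟩ := h
      exact hi rfl
    · rw [hadj_iff] at h
      congr 1
      omega
  · rintro ⟨hne, h⟩
    rw [hadj_iff]
    have hlt : (agr x y).card < m := by
      have h1 : (agr x y).card ≤ m := by simpa using Finset.card_le_univ (agr x y)
      refine lt_of_le_of_ne h1 fun hc => hne ?_
      have : agr x y = Finset.univ := by
        rw [← Finset.card_eq_iff_eq_univ]; simpa using hc
      funext i
      have : i ∈ agr x y := by rw [this]; simp
      simpa [agr] using this
    by_contra hc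
    have h2 : (agr x y).card ≤ m - 2 := by omega
    have h3 := Nat.choose_le_choose r h2
    obtain ⟨m', rfl⟩ : ∃ m', m = m' + 2 := ⟨m - 2, by omega⟩
    obtain ⟨r', rfl⟩ : ∃ r', r = r' + 1 := ⟨r - 1, by omega⟩
    rw [show m' + 2 - 1 = m' + 1 by omega, Nat.choose_succ_succ'] at h
    rw [show m' + 2 - 2 = m' by omega] at h3
    have := Nat.choose_pos (show r' ≤ m' by omega)
    omega

lemma mem_codeAut {I : Type} (C : Set (I → ZMod 2)) (π : Equiv.Perm I) :
    π ∈ codeAut C ↔ ∀ c, c ∘ π ∈ C ↔ c ∈ C := by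
  unfold codeAut
  simp only [Set.mem_ofPred_eq]
  have hc : ∀ c : I → ZMod 2, c ∈ (fun c => c ∘ ⇑π.symm) '' C ↔ c ∘ π ∈ C := by
    intro c
    constructor
    · rintro ⟨d, hd, rfl⟩
      simpa [Function.comp_assoc] using hd
    · intro h
      exact ⟨_, h, by simp [Function.comp_assoc]⟩
  rw [Set.ext_iff]
  simp only [hc]

lemma autJC {n m r : ℕ} (hn : 3 ≤ n) (hr : 1 ≤ r) (hr' : r ≤ m - 1) :
    codeAut (JC n m r : Set _) = wreathPermSet (Fin n) m := by
  have : Nontrivial (Fin n) := Fin.nontrivial_iff_two_le.2 (by omega)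
  ext π
  constructor
  · intro h
    rw [mem_codeAut] at h
    have hC : ∀ c, c ∘ π ∈ Cubes n m r ↔ c ∈ Cubes n m r := by
      intro c
      rw [mem_Cubes hn (by omega), mem_Cubes hn (by omega), wt_comp]
      have := h c
      simp only [SetLike.mem_coe] at this
      rw [this]
    apply wreath_of_adj
    intro x y
    rw [hadj_iff_count hn hr hr', hadj_iff_count hn hr hr']
    have : {c ∈ Cubes n m r | c x = 1 ∧ c y = 1} =
        (fun c => c ∘ π) '' {c ∈ Cubes n m r | c (π x) = 1 ∧ c (π y) = 1} := by
      ext c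
      constructor
      · rintro ⟨h1, h2⟩
        have e : (c ∘ π.symm) ∘ π = c := by simp [Function.comp_assoc]
        refine ⟨c ∘ π.symm, ⟨?_, by simpa using h2⟩, e⟩
        rw [← hC, e]; exact h1
      · rintro ⟨d, ⟨h1, h2⟩, rfl⟩
        exact ⟨(hC d).2 h1, h2⟩
    rw [this, Set.ncard_image_of_injective _ π.surjective.injective_comp_right]
    simp
  · rintro ⟨σ, p, hf⟩
    rw [mem_codeAut]
    have fwd : ∀ c ∈ JC n m r, c ∘ π ∈ JC n m r := by
      intro c hc
      induction hc using Submodule.span_induction with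
      | mem g h =>
        obtain ⟨S, hS, hg⟩ := h
        refine Submodule.subset_span ⟨S.map (p⁻¹).toEmbedding, by simpa using hS, ?_⟩
        intro x y hxy
        apply hg
        intro i hi
        rw [hf, hf, hxy (p⁻¹ i) (Finset.mem_map_of_mem _ hi)]
      | zero => exact Submodule.zero_mem _
      | add a b _ _ ha hb => exact Submodule.add_mem _ ha hb
      | smul t a _ ha => exact Submodule.smul_mem _ t ha
    have hinv : ∀ (x : Fin m → Fin n) i, π.symm x i = (σ (p i))⁻¹ (x (p i)) := by
      intro x i
      have := hf (π.symm x) (p i)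
      simp at this
      rw [this]
      simp
    have bwd : ∀ c ∈ JC n m r, c ∘ π.symm ∈ JC n m r := by
      intro c hc
      induction hc using Submodule.span_induction with
      | mem g h =>
        obtain ⟨S, hS, hg⟩ := h
        refine Submodule.subset_span ⟨S.map p.toEmbedding, by simpa using hS, ?_⟩
        intro x y hxy
        apply hg
        intro i hi
        rw [hinv, hinv, hxy (p i) (Finset.mem_map_of_mem _ hi)]
      | zero => exact Submodule.zero_mem _
      | add a b _ _ ha hb => exact Submodule.add_mem _ ha hb
      | smul t a _ ha => exact Submodule.smul_mem _ t ha
    intro c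
    refine ⟨fun h => ?_, fwd c⟩
    have := bwd _ h
    simpa [Function.comp_assoc] using this

lemma dual_aut_le {I : Type} [Fintype I] (C : Set (I → ZMod 2)) :
    codeAut C ⊆ codeAut (dualCode C) := by
  intro π h
  rw [mem_codeAut] at h ⊢
  intro c
  unfold dualCode
  simp only [Set.mem_ofPred_eq]
  constructor
  · intro hc d hd
    have := hc (d ∘ π) ((h d).2 hd)
    rw [← this, ← Equiv.sum_comp π]
    rfl
  · intro hc d hd
    have e : (d ∘ π.symm) ∘ π = d := by simp [Function.comp_assoc]
    have := hc (d ∘ π.symm) ((h _).1 (by rw [e]; exact hd))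
    rw [← this, ← Equiv.sum_comp π (fun i => c i * (d ∘ π.symm) i)]
    simp

lemma dual_dual {I : Type} [Fintype I] (C : Submodule (ZMod 2) (I → ZMod 2)) :
    dualCode (dualCode (C : Set (I → ZMod 2))) = C := by
  classical
  apply Set.Subset.antisymm
  · intro c hc
    by_contra hcC
    obtain ⟨f, hf1, hf2⟩ := Submodule.exists_le_ker_of_notMem hcC
    have hfe : ∀ d : I → ZMod 2, f d = ∑ i, f (Pi.single i 1) * d i := by
      intro d
      rw [LinearMap.pi_apply_eq_sum_univ f d]
      refine Finset.sum_congr rfl fun i _ => ?_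
      rw [smul_eq_mul, mul_comm]
      congr 2
      funext j
      simp [Pi.single_apply, eq_comm]
    have := hc (fun i => f (Pi.single i 1)) (fun d hd => by
      rw [← hfe]; exact hf2 hd)
    apply hf1
    rw [hfe, ← this]
    exact Finset.sum_congr rfl fun i _ => mul_comm _ _
  · intro c hc d hd
    rw [← hd c hc]
    exact Finset.sum_congr rfl fun i _ => mul_comm _ _

lemma dual_aut {I : Type} [Fintype I] (C : Submodule (ZMod 2) (I → ZMod 2)) :
    codeAut (dualCode (C : Set (I → ZMod 2))) = codeAut (C : Set (I → ZMod 2)) := by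
  apply Set.Subset.antisymm
  · have := dual_aut_le (dualCode (C : Set (I → ZMod 2)))
    rwa [dual_dual] at this
  · exact dual_aut_le _

/-- For `n ≥ 3`, `m ≥ 1` and `1 ≤ r ≤ m − 1`, the automorphism group of
the dual Berman code `DB_n(r, m)` (equivalently, of the Berman code `B_n(r, m)`) is the
wreath product `S_n ≀ S_m` in its product action on `[n]^m`; for `r ∈ {0, m}` it is the
full symmetric group `S_{n^m}`. -/
theorem statement0 (n m : ℕ) (hn : 3 ≤ n) (hm : 1 ≤ m) (r : ℕ) :
    (1 ≤ r → r ≤ m - 1 →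
      codeAut (bermanDual n m r) = wreathPermSet (Fin n) m ∧
      codeAut (berman n m r) = wreathPermSet (Fin n) m) ∧
    ((r = 0 ∨ r = m) →
      codeAut (bermanDual n m r) = Set.univ ∧
      codeAut (berman n m r) = Set.univ) := by
  have hn0 : 0 < n := by omega
  unfold berman
  rw [bermanDual_eq n hn0, dual_aut]
  refine ⟨fun h1 h2 => ⟨autJC hn h1 h2, autJC hn h1 h2⟩, fun h => ?_⟩
  rw [and_self]
  rw [Set.eq_univ_iff_forall]
  intro π
  rw [mem_codeAut]
  intro c
  simp only [SetLike.mem_coe]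
  rcases h with rfl | rfl
  · rw [JC_zero, JC_zero]
    constructor
    · rintro ⟨x, hx⟩
      exact ⟨x, fun v => by simpa using hx (π.symm v)⟩
    · rintro ⟨x, hx⟩
      exact ⟨x, fun v => hx _⟩
  · exact ⟨fun _ => JC_top _ _ _ le_rfl _, fun _ => JC_top _ _ _ le_rfl _⟩
end

section
/- Let n ≥ 5 be odd, m ≥ 1, and W ⊆ {0,1,…,m}. If W is not a boundary case (i.e., W ∉ {∅, {0}, {1,…,m}, {0,1,…,m}}), then the automorphism group of the abelian code C(n,m,W) equals the wreath product S_n ≀ S_m in its product action on Z_n^m. If W is one of the boundary cases, then the automorphism group of C(n,m,W) is the full symmetric group S_{n^m}. -/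
open Matrix

/-- The abelian code `C(n, m, W)`: binary vectors indexed by `(Z_n)^m` whose finite-field
DFT (with respect to a primitive `n`-th root of unity `α` in a field `K` of characteristic 2)
vanishes at every frequency `j` whose Hamming weight lies outside `W`. -/
def abelianCode (n m : ℕ) [NeZero n] (W : Set ℕ) (K : Type) [Field K] (α : K) :
    Set ((Fin m → ZMod n) → ZMod 2) :=
  { a | ∀ j : Fin m → ZMod n, hammingNorm j ∉ W →
      ∑ i : Fin m → ZMod n, (if a i = 1 then (1 : K) else 0) * α ^ (∑ k, i k * j k).val = 0 }

/-- The four boundary cases of weight sets: `∅` (zero code), `{0}` (repetition code),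
`{1,…,m}` (single parity check code), `{0,1,…,m}` (full space). -/
def BoundaryW (m : ℕ) (W : Set ℕ) : Prop :=
  W = ∅ ∨ W = {0} ∨ W = Set.Icc 1 m ∨ W = Set.Iic m

/-! ### Part I: permutations preserving Hamming adjacency lie in the wreath product -/

/-- `x` and `y` differ exactly at coordinate `i`. -/
def DiffAt {m : ℕ} {β : Type} (x y : Fin m → β) (i : Fin m) : Prop :=
  x i ≠ y i ∧ ∀ l, l ≠ i → x l = y l

theorem diffAt_iff {m : ℕ} {β : Type} [DecidableEq β] (x y : Fin m → β) :
    hammingDist x y = 1 ↔ ∃ i, DiffAt x y i := by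
  unfold hammingDist
  rw [Finset.card_eq_one]
  constructor
  · rintro ⟨i, hi⟩
    refine ⟨i, ?_, ?_⟩
    · have : i ∈ ({i} : Finset (Fin m)) := Finset.mem_singleton_self i
      rw [← hi] at this
      simpa using this
    · intro l hl
      by_contra h
      have : l ∈ ({i} : Finset (Fin m)) := by rw [← hi]; simpa using h
      exact hl (by simpa using this)
  · rintro ⟨i, h1, h2⟩
    refine ⟨i, ?_⟩
    ext l
    simp only [Finset.mem_filter, Finset.mem_univ, true_and, Finset.mem_singleton]
    constructor
    · intro h
      by_contra hl
      exact h (h2 l hl)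
    · rintro rfl
      exact h1

theorem DiffAt.symm {m : ℕ} {β : Type} {x y : Fin m → β} {i : Fin m} (h : DiffAt x y i) :
    DiffAt y x i := ⟨fun e => h.1 e.symm, fun l hl => (h.2 l hl).symm⟩

theorem DiffAt.unique {m : ℕ} {β : Type} {x y : Fin m → β} {i j : Fin m} (h : DiffAt x y i)
    (h' : DiffAt x y j) : i = j := by
  by_contra hij
  exact h.1 (h'.2 i hij)

theorem diffAt_update {m : ℕ} {β : Type} (x : Fin m → β) (i : Fin m) (c : β) (hc : c ≠ x i) :
    DiffAt x (Function.update x i c) i := by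
  refine ⟨?_, fun l hl => ?_⟩
  · simpa using hc.symm
  · simp [hl]

/-- three pairwise adjacent points are on a line -/
theorem DiffAt.triangle {m : ℕ} {β : Type} {x y z : Fin m → β} {i j k : Fin m}
    (h1 : DiffAt x y i) (h2 : DiffAt x z j) (h3 : DiffAt y z k) : i = j := by
  by_contra hij
  have a := h1.1
  have b := h2.1
  have c := h2.2 i hij
  have d := h1.2 j (Ne.symm hij)
  have e : i = k := by
    by_contra hk
    exact a (c.trans (h3.2 i hk).symm)
  have f : j = k := by
    by_contra hk
    exact b (d.trans (h3.2 j hk))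
  exact hij (e.trans f.symm)

/-- in a square without diagonals opposite edges have the same direction -/
theorem DiffAt.square {m : ℕ} {β : Type} {x y z w : Fin m → β} {i j k l : Fin m}
    (h1 : DiffAt x y i) (h2 : DiffAt x z j) (hij : i ≠ j) (h3 : DiffAt y w k) (h4 : DiffAt z w l)
    (hne : w ≠ x) : k = j := by
  by_contra hk
  -- w j = y j = x j ≠ z j so l = j
  have e1 : w j = x j := ((h1.2 j (Ne.symm hij)).trans (h3.2 j (Ne.symm hk))).symm
  have hl : j = l := by
    by_contra hjl
    exact h2.1 (e1.symm.trans (h4.2 j hjl).symm)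
  apply hne
  funext t
  by_cases ht : t = j
  · rw [ht, e1]
  · rw [← h4.2 t (by rw [← hl]; exact ht), ← h2.2 t ht]

theorem update_induction {m : ℕ} {β : Type} {P : (Fin m → β) → Prop} (T : Fin m → Prop)
    (x y : Fin m → β)
    (hxy : ∀ i, ¬ T i → x i = y i)
    (h0 : P x) (hs : ∀ z i, T i → P z → P (Function.update z i (y i))) : P y := by
  classical
  have key : ∀ s : Finset (Fin m), P (s.piecewise y x) := by
    intro s
    induction s using Finset.induction_on with
    | empty => simpa using h0
    | insert a s ha ih =>
      rw [Finset.piecewise_insert]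
      by_cases hT : T a
      · exact hs _ _ hT ih
      · have : Function.update (s.piecewise y x) a (y a) = s.piecewise y x := by
          apply Function.update_eq_self_iff.2
          simp [ha, hxy a hT]
        rw [this]; exact ih
  have := key Finset.univ
  simpa using this

theorem wreath_of_adj_s1 {m : ℕ} {β : Type} [Fintype β] [DecidableEq β] (hβ : 1 < Fintype.card β)
    (g : Equiv.Perm (Fin m → β))
    (hg : ∀ x y, hammingDist (g x) (g y) = 1 ↔ hammingDist x y = 1) :
    g ∈ wreathPermSet β m := by
  classical
  have hadj : ∀ x y i, DiffAt x y i → ∃ j, DiffAt (g x) (g y) j := by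
    intro x y i h
    exact (diffAt_iff _ _).1 ((hg x y).2 ((diffAt_iff _ _).2 ⟨i, h⟩))
  have hadj' : ∀ x y j, DiffAt (g x) (g y) j → ∃ i, DiffAt x y i := by
    intro x y i h
    exact (diffAt_iff _ _).1 ((hg x y).1 ((diffAt_iff _ _).2 ⟨i, h⟩))
  have hnt : ∀ b : β, ∃ c, c ≠ b := fun b => by
    have := Fintype.one_lt_card_iff_nontrivial.1 hβ
    exact exists_ne b
  -- direction map
  have hτ : ∀ x i, ∃ k, ∀ y, DiffAt x y i → DiffAt (g x) (g y) k := by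
    intro x i
    obtain ⟨c, hc⟩ := hnt (x i)
    have h0 := diffAt_update x i c hc
    obtain ⟨k, hk⟩ := hadj _ _ _ h0
    refine ⟨k, fun y hy => ?_⟩
    by_cases hyc : y = Function.update x i c
    · rw [hyc]; exact hk
    · obtain ⟨k', hk'⟩ := hadj _ _ _ hy
      have h3 : DiffAt (Function.update x i c) y i := by
        refine ⟨?_, fun l hl => ?_⟩
        · intro e
          apply hyc
          funext l
          by_cases hl : l = i
          · rw [hl, e]
          · simp [hl, hy.2 l hl]
        · simp [hl, hy.2 l hl]
      obtain ⟨k'', hk''⟩ := hadj _ _ _ h3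
      have := hk.triangle hk' hk''
      rw [this]; exact hk'
  choose τ hτ using hτ
  have hinj : ∀ x, Function.Injective (τ x) := by
    intro x i j hij
    by_contra hne
    obtain ⟨c, hc⟩ := hnt (x i)
    obtain ⟨d, hd⟩ := hnt (x j)
    have h1 := hτ x i _ (diffAt_update x i c hc)
    have h2 := hτ x j _ (diffAt_update x j d hd)
    rw [← hij] at h2
    have h3 : DiffAt (g (Function.update x i c)) (g (Function.update x j d)) (τ x i) := by
      refine ⟨?_, fun l hl => (h1.2 l hl).symm.trans (h2.2 l hl)⟩
      intro e
      have e2 : g (Function.update x i c) = g (Function.update x j d) := by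
        funext l
        by_cases hl : l = τ x i
        · rw [hl, e]
        · exact (h1.2 l hl).symm.trans (h2.2 l hl)
      have e3 := congrFun (g.injective e2) i
      simp [hne] at e3
      exact hc e3
    obtain ⟨k, hk⟩ := hadj' _ _ _ h3
    have ei : i = k := by
      by_contra hik
      have := hk.2 i hik
      simp [hne] at this
      exact hc this
    have ej : j = k := by
      by_contra hjk
      have := hk.2 j hjk
      simp [Ne.symm hne] at this
      exact hd this.symm
    exact hne (ei.trans ej.symm)
  have hstep : ∀ x y l, DiffAt x y l → τ y = τ x := by
    intro x y l hxy
    funext i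
    by_cases hil : i = l
    · subst hil
      exact (hτ y i x hxy.symm).unique (hτ x i y hxy).symm
    · obtain ⟨c, hc⟩ := hnt (x i)
      have h2 := diffAt_update x i c hc
      have hyi : x i = y i := hxy.2 i hil
      have h3 := diffAt_update y i c (by rw [← hyi]; exact hc)
      have h4 : DiffAt (Function.update x i c) (Function.update y i c) l := by
        refine ⟨?_, fun t ht => ?_⟩
        · simp [Ne.symm hil, hxy.1]
        · by_cases hti : t = i
          · subst hti; simp
          · simp [hti, hxy.2 t ht]
      obtain ⟨q, hq⟩ := hadj _ _ _ h4
      refine (hτ x l _ hxy).square (hτ x i _ h2) (fun e => hil (hinj x e).symm) (hτ y i _ h3) hq ?_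
      intro e
      have := congrFun (g.injective e) i
      simp at this
      exact hc this
  have hstep' : ∀ x l c, τ (Function.update x l c) = τ x := by
    intro x l c
    by_cases hc : c = x l
    · rw [hc]; simp
    · exact hstep _ _ l (diffAt_update x l c hc)
  have hconst : ∀ x y, τ y = τ x := by
    intro x y
    refine update_induction (P := fun z => τ z = τ x) (fun _ => True) x y (by simp) rfl ?_
    intro z i _ hz
    exact (hstep' z i (y i)).trans hz
  obtain ⟨b0⟩ : Nonempty β := Fintype.card_pos_iff.1 (by omega)
  let x0 : Fin m → β := fun _ => b0
  let π : Equiv.Perm (Fin m) := Equiv.ofBijective (τ x0) (Finite.injective_iff_bijective.1 (hinj x0))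
  have hπ : ∀ x y i, DiffAt x y i → DiffAt (g x) (g y) (π i) := by
    intro x y i h
    have := hτ x i y h
    rw [hconst x0 x] at this
    exact this
  have hdep : ∀ x y i, x i = y i → g x (π i) = g y (π i) := by
    intro x y i hi
    refine (update_induction (P := fun z => g z (π i) = g x (π i)) (fun l => l ≠ i) x y ?_ rfl ?_).symm
    · intro l hl
      have : l = i := by simpa using hl
      rw [this, hi]
    · intro z l hl hz
      by_cases hc : y l = z l
      · rw [hc]; simpa using hz
      · have := hπ _ _ _ (diffAt_update z l (y l) hc)
        exact (this.2 (π i) (fun e => hl (π.injective e).symm)).symm.trans hz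
  have hσinj : ∀ k, Function.Injective (fun c : β => g (Function.update x0 (π⁻¹ k) c) k) := by
    intro k c c' h
    by_contra hcc
    have hd : DiffAt (Function.update x0 (π⁻¹ k) c) (Function.update x0 (π⁻¹ k) c') (π⁻¹ k) := by
      refine ⟨by simpa using hcc, fun l hl => ?_⟩
      rw [Function.update_of_ne hl, Function.update_of_ne hl]
    have := (hπ _ _ _ hd).1
    have hpk : π (π⁻¹ k) = k := π.apply_symm_apply k
    rw [hpk] at this
    exact this h
  refine ⟨fun k => Equiv.ofBijective _ (Finite.injective_iff_bijective.1 (hσinj k)), π, ?_⟩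
  intro x k
  have := hdep x (Function.update x0 (π⁻¹ k) (x (π⁻¹ k))) (π⁻¹ k) (by simp)
  simpa using this


/-! ### Part II: the counting argument -/

/-- number of points `z` on which the `f`-coloured distances to `x` and `y` differ -/
def Ncount {m : ℕ} {β : Type} [Fintype β] [DecidableEq β] (f : ℕ → ZMod 2)
    (x y : Fin m → β) : ℤ :=
  ∑ z : Fin m → β, if f (hammingDist x z) ≠ f (hammingDist y z) then 1 else 0

theorem Ncount_perm {m : ℕ} {β : Type} [Fintype β] [DecidableEq β] (f : ℕ → ZMod 2)
    (h : Equiv.Perm (Fin m → β))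
    (hh : ∀ x y, f (hammingDist (h x) (h y)) = f (hammingDist x y)) (x y : Fin m → β) :
    Ncount f (h x) (h y) = Ncount f x y := by
  unfold Ncount
  rw [← Equiv.sum_comp h]
  simp only [hh]

theorem wreath_isometry {m : ℕ} {β : Type} [DecidableEq β] (h : Equiv.Perm (Fin m → β))
    (hh : h ∈ wreathPermSet β m) (x y : Fin m → β) :
    hammingDist (h x) (h y) = hammingDist x y := by
  obtain ⟨σ, π, hσ⟩ := hh
  unfold hammingDist
  have : (Finset.univ.filter fun i => h x i ≠ h y i)
      = (Finset.univ.filter fun i => x i ≠ y i).map π.toEmbedding := by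
    ext k
    simp only [Finset.mem_filter, Finset.mem_univ, true_and, Finset.mem_map_equiv, hσ]
    constructor
    · intro hk e
      exact hk (congrArg (σ k) e)
    · intro hk e
      exact hk ((σ k).injective e)
  rw [this, Finset.card_map]

theorem exists_perm_pair {β : Type} [DecidableEq β] (a b a' b' : β) (h : a = b ↔ a' = b') :
    ∃ s : Equiv.Perm β, s a = a' ∧ s b = b' := by
  by_cases hab : a = b
  · have h2 := h.1 hab
    subst hab; subst h2
    exact ⟨Equiv.swap a a', by simp, by simp⟩
  · have h2 : a' ≠ b' := fun e => hab (h.2 e)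
    refine ⟨(Equiv.swap a a').trans (Equiv.swap (Equiv.swap a a' b) b'), ?_, by simp⟩
    have h3 : a' ≠ Equiv.swap a a' b := by
      intro e
      have : Equiv.swap a a' a = Equiv.swap a a' b := by rw [Equiv.swap_apply_left]; exact e
      exact hab ((Equiv.swap a a').injective this)
    simp only [Equiv.trans_apply, Equiv.swap_apply_left]
    exact Equiv.swap_apply_of_ne_of_ne h3 h2

theorem Ncount_adj {m : ℕ} {β : Type} [Fintype β] [DecidableEq β] (f : ℕ → ZMod 2)
    {x y x' y' : Fin m → β} {i i' : Fin m} (h : DiffAt x y i) (h' : DiffAt x' y' i') :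
    Ncount f x y = Ncount f x' y' := by
  let π := Equiv.swap i i'
  have hk : ∀ k, ∃ s : Equiv.Perm β, s (x (π⁻¹ k)) = x' k ∧ s (y (π⁻¹ k)) = y' k := by
    intro k
    apply exists_perm_pair
    by_cases hki : k = i'
    · subst hki
      have : π⁻¹ k = i := by simp [π]
      rw [this]
      exact iff_of_false h.1 h'.1
    · refine iff_of_true (h.2 _ ?_) (h'.2 _ hki)
      intro e
      apply hki
      have : k = π i := by rw [← e]; simp
      rw [this]; simp [π]
  choose σ hσ1 hσ2 using hk
  let g : Equiv.Perm (Fin m → β) :=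
    (Equiv.arrowCongr π (Equiv.refl β)).trans (Equiv.piCongrRight σ)
  have hg : ∀ z k, g z k = σ k (z (π⁻¹ k)) := by
    intro z k
    rfl
  have hgw : g ∈ wreathPermSet β m := ⟨σ, π, hg⟩
  have e1 : g x = x' := by funext k; rw [hg, hσ1]
  have e2 : g y = y' := by funext k; rw [hg, hσ2]
  rw [← e1, ← e2]
  exact (Ncount_perm f g (fun x y => by rw [wreath_isometry g hgw]) x y).symm

/-- Hamming distance off coordinate `i`. -/
def distOff {m : ℕ} {β : Type} [DecidableEq β] (i : Fin m) (x z : Fin m → β) : ℕ :=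
  (Finset.univ.filter fun l => l ≠ i ∧ x l ≠ z l).card

theorem hammingDist_split {m : ℕ} {β : Type} [DecidableEq β] (i : Fin m) (x z : Fin m → β) :
    hammingDist x z = distOff i x z + if x i = z i then 0 else 1 := by
  unfold hammingDist distOff
  split_ifs with h
  · rw [add_zero]
    congr 1
    ext l
    simp only [Finset.mem_filter, Finset.mem_univ, true_and]
    constructor
    · intro hl
      exact ⟨fun e => hl (by rw [e]; exact h), hl⟩
    · exact fun hl => hl.2
  · rw [← Finset.card_insert_of_notMem (a := i)]
    · congr 1
      ext l
      simp only [Finset.mem_filter, Finset.mem_univ, true_and, Finset.mem_insert]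
      by_cases hl : l = i
      · subst hl; simp [h]
      · simp [hl]
    · simp

theorem distOff_update_right {m : ℕ} {β : Type} [DecidableEq β] (i : Fin m) (x z : Fin m → β)
    (c : β) : distOff i x (Function.update z i c) = distOff i x z := by
  unfold distOff
  congr 1
  ext l
  simp only [Finset.mem_filter, Finset.mem_univ, true_and]
  by_cases hl : l = i
  · simp [hl]
  · simp [hl]

theorem distOff_update_left {m : ℕ} {β : Type} [DecidableEq β] (i : Fin m) (x z : Fin m → β)
    (c : β) : distOff i (Function.update x i c) z = distOff i x z := by
  unfold distOff
  congr 1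
  ext l
  simp only [Finset.mem_filter, Finset.mem_univ, true_and]
  by_cases hl : l = i
  · simp [hl]
  · simp [hl]

theorem line_sum {m : ℕ} {β : Type} [Fintype β] [DecidableEq β] (i : Fin m)
    (F : (Fin m → β) → ℤ) :
    ∑ z, ∑ c, F (Function.update z i c) = Fintype.card β * ∑ z, F z := by
  have h1 : ∑ z, ∑ c, F (Function.update z i c)
      = ∑ p : (Fin m → β) × β, F (Function.update p.1 i p.2) := by
    rw [Fintype.sum_prod_type]
  have h2 : ∑ p : (Fin m → β) × β, F p.1 = Fintype.card β * ∑ z, F z := by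
    rw [Fintype.sum_prod_type, Finset.mul_sum]
    simp
  rw [h1, ← h2]
  let φ : (Fin m → β) × β → (Fin m → β) × β := fun p => (Function.update p.1 i p.2, p.1 i)
  have hφ : Function.Involutive φ := by
    intro p
    simp [φ]
  exact Equiv.sum_comp hφ.toPerm (fun p => F p.1)

theorem sum_two_rest {β : Type} [Fintype β] [DecidableEq β] (G : β → ℤ) (p q : β) (hpq : p ≠ q)
    (C : ℤ) (hC : ∀ c, c ≠ p → c ≠ q → G c = C) :
    ∑ c, G c = G p + G q + ((Fintype.card β : ℤ) - 2) * C := by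
  rw [← Finset.sum_add_sum_compl ({p, q} : Finset β), Finset.sum_pair hpq]
  congr 1
  have : ∑ c ∈ ({p, q} : Finset β)ᶜ, G c = ∑ c ∈ ({p, q} : Finset β)ᶜ, C := by
    apply Finset.sum_congr rfl
    intro c hc
    simp only [Finset.mem_compl, Finset.mem_insert, Finset.mem_singleton, not_or] at hc
    exact hC c hc.1 hc.2
  rw [this, Finset.sum_const, Finset.card_compl, Finset.card_pair hpq, nsmul_eq_mul]
  have h2 : 2 ≤ Fintype.card β := by
    rw [← Finset.card_pair hpq]; exact Finset.card_le_univ _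
  push_cast [Nat.cast_sub h2]
  ring

theorem line_ineq (α β γ δ : ZMod 2) (N : ℤ) (hN : 5 ≤ N) :
    (if β = δ then (0 : ℤ) else 2) ≤
    2 * ((if α ≠ δ then (1 : ℤ) else 0) + (if β ≠ γ then 1 else 0)
      + (N - 2) * (if β ≠ δ then 1 else 0))
      - 2 * (if α ≠ β then 1 else 0) - 2 * (if γ ≠ δ then 1 else 0) := by
  have h : ∀ a : ZMod 2, a = 0 ∨ a = 1 := by decide
  rcases h α with rfl | rfl <;> rcases h β with rfl | rfl <;> rcases h γ with rfl | rfl <;>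
    rcases h δ with rfl | rfl <;> simp <;> linarith

theorem Ncount_lt {m : ℕ} {β : Type} [Fintype β] [DecidableEq β] (hβ : 5 ≤ Fintype.card β)
    (f : ℕ → ZMod 2) (hf : ∃ d, 1 ≤ d ∧ d ≤ m ∧ f d ≠ f m)
    (u v : Fin m → β) (i i₂ : Fin m) (hne : i₂ ≠ i) (hi : u i ≠ v i) (hi2 : u i₂ ≠ v i₂) :
    Ncount f u (Function.update u i (v i)) < Ncount f u v := by
  classical
  have hN : (5 : ℤ) ≤ Fintype.card β := by exact_mod_cast hβ
  set u' := Function.update u i (v i) with hu'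
  set v' := Function.update v i (u i) with hv'
  have hadj : Ncount f v v' = Ncount f u u' :=
    Ncount_adj f (diffAt_update v i _ hi) (diffAt_update u i _ (Ne.symm hi))
  let F : (Fin m → β) → ℤ := fun z =>
    2 * (if f (hammingDist u z) ≠ f (hammingDist v z) then 1 else 0)
    - (if f (hammingDist u z) ≠ f (hammingDist u' z) then 1 else 0)
    - (if f (hammingDist v z) ≠ f (hammingDist v' z) then 1 else 0)
  have hF : ∑ z, F z = 2 * Ncount f u v - 2 * Ncount f u u' := by
    simp only [F, Finset.sum_sub_distrib, ← Finset.mul_sum]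
    have : Ncount f v v' = Ncount f u u' := hadj
    unfold Ncount at *
    linarith
  have hline : ∀ z, (if f (distOff i u z + 1) = f (distOff i v z + 1) then (0 : ℤ) else 2)
      ≤ ∑ c, F (Function.update z i c) := by
    intro z
    have hui : u' i = v i := by simp [hu']
    have hvi : v' i = u i := by simp [hv']
    have du : ∀ z, distOff i u' z = distOff i u z := fun z => distOff_update_left i u z _
    have dv : ∀ z, distOff i v' z = distOff i v z := fun z => distOff_update_left i v z _
    rw [sum_two_rest _ (u i) (v i) hi
      (2 * if f (distOff i u z + 1) ≠ f (distOff i v z + 1) then 1 else 0)]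
    · have := line_ineq (f (distOff i u z)) (f (distOff i u z + 1)) (f (distOff i v z))
        (f (distOff i v z + 1)) _ hN
      refine this.trans (le_of_eq ?_)
      simp only [F, hammingDist_split i, distOff_update_right, du, dv, hui, hvi,
        Function.update_self, if_true, if_neg hi, if_neg (Ne.symm hi), add_zero]
      have c1 : (if f (distOff i u z + 1) ≠ f (distOff i u z) then (1:ℤ) else 0)
        = if f (distOff i u z) ≠ f (distOff i u z + 1) then 1 else 0 := by simp only [ne_comm]
      have c2 : (if f (distOff i v z + 1) ≠ f (distOff i v z) then (1:ℤ) else 0)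
        = if f (distOff i v z) ≠ f (distOff i v z + 1) then 1 else 0 := by simp only [ne_comm]
      rw [c1, c2]
      ring
    · intro c h1 h2
      simp only [F, hammingDist_split i, distOff_update_right, du, dv, hui, hvi,
        Function.update_self, if_neg (Ne.symm h1), if_neg (Ne.symm h2)]
      simp
  -- strictness
  have hex : ∃ z, f (distOff i u z + 1) ≠ f (distOff i v z + 1) := by
    by_contra hcon
    push Not at hcon
    obtain ⟨d, hd1, hdm, hd⟩ := hf
    have hle : ∀ w z : Fin m → β, distOff i w z ≤ m - 1 := by
      intro w z
      have : distOff i w z ≤ (Finset.univ.erase i).card := by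
        apply Finset.card_le_card
        intro l hl
        simp only [Finset.mem_filter, Finset.mem_univ, true_and] at hl
        simp [hl.1]
      simpa using this
    have hstep : ∀ j, j + 1 < m → ∃ b, j < b ∧ b + 1 ≤ m ∧ f (j + 1) = f (b + 1) := by
      intro j hj
      have hc : j ≤ ((Finset.univ.erase i).erase i₂).card := by
        rw [Finset.card_erase_of_mem (by simp [hne]), Finset.card_erase_of_mem (by simp)]
        simp; omega
      obtain ⟨S, hS, hSc⟩ := Finset.exists_subset_card_eq hc
      have hSi : ∀ l ∈ S, l ≠ i ∧ l ≠ i₂ := by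
        intro l hl
        have := hS hl
        simp only [Finset.mem_erase, Finset.mem_univ, and_true] at this
        exact ⟨this.2, this.1⟩
      have hother : ∀ l, ∃ c, c ≠ u l ∧ c ≠ v l := by
        intro l
        have : ({u l, v l} : Finset β).card < (Finset.univ : Finset β).card := by
          refine lt_of_le_of_lt Finset.card_le_two ?_
          rw [Finset.card_univ]; omega
        obtain ⟨c, _, hc⟩ := Finset.exists_mem_notMem_of_card_lt_card this
        simp only [Finset.mem_insert, Finset.mem_singleton, not_or] at hc
        exact ⟨c, hc⟩
      choose o ho1 ho2 using hother
      let z : Fin m → β := fun l => if l ∈ S then o l else u l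
      have ha : distOff i u z = j := by
        unfold distOff
        rw [← hSc]
        congr 1
        ext l
        simp only [Finset.mem_filter, Finset.mem_univ, true_and, z]
        by_cases hl : l ∈ S
        · simp [hl, (hSi l hl).1, (ho1 l).symm]
        · simp [hl]
      have hb : j < distOff i v z := by
        unfold distOff
        rw [← hSc]
        apply Finset.card_lt_card
        refine ⟨?_, ?_⟩
        · intro l hl
          simp only [Finset.mem_filter, Finset.mem_univ, true_and, z]
          simp [hl, (hSi l hl).1, (ho2 l).symm]
        · intro hsub
          have h2 : i₂ ∉ S := fun h => (hSi _ h).2 rfl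
          apply h2
          apply hsub
          simp only [Finset.mem_filter, Finset.mem_univ, true_and, z]
          simp [h2, hne, Ne.symm hi2]
      refine ⟨distOff i v z, hb, ?_, ?_⟩
      · have := hle v z; omega
      · rw [← ha]; exact hcon z
    have hall : ∀ t j, j + 1 ≤ m → m - (j + 1) ≤ t → f (j + 1) = f m := by
      intro t
      induction t with
      | zero =>
        intro j h1 h2
        rw [show j + 1 = m by omega]
      | succ t ih =>
        intro j h1 h2
        by_cases h3 : j + 1 < m
        · obtain ⟨b, hb1, hb2, hb3⟩ := hstep j h3
          rw [hb3]
          exact ih b hb2 (by omega)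
        · rw [show j + 1 = m by omega]
    apply hd
    have := hall m (d - 1) (by omega) (by omega)
    rwa [show d - 1 + 1 = d by omega] at this
  have hpos : 0 < ∑ z, ∑ c, F (Function.update z i c) := by
    apply Finset.sum_pos'
    · intro z _
      refine le_trans ?_ (hline z)
      split_ifs <;> norm_num
    · obtain ⟨z, hz⟩ := hex
      refine ⟨z, Finset.mem_univ _, ?_⟩
      refine lt_of_lt_of_le ?_ (hline z)
      rw [if_neg hz]; norm_num
  rw [line_sum, hF] at hpos
  have : 0 < 2 * Ncount f u v - 2 * Ncount f u u' := pos_of_mul_pos_right hpos (by linarith)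
  linarith

theorem wreath_of_colour {m : ℕ} {β : Type} [Fintype β] [DecidableEq β]
    (hβ : 5 ≤ Fintype.card β)
    (f : ℕ → ZMod 2) (hf : ∃ d, 1 ≤ d ∧ d ≤ m ∧ f d ≠ f m)
    (g : Equiv.Perm (Fin m → β))
    (hg : ∀ x y, f (hammingDist (g x) (g y)) = f (hammingDist x y)) :
    g ∈ wreathPermSet β m := by
  have hN := Ncount_perm f g hg
  -- a pair at distance ≥ 2 has larger count than any adjacent pair
  have key : ∀ x y u v : Fin m → β, hammingDist x y = 1 → u ≠ v →
      Ncount f u v = Ncount f x y → hammingDist u v = 1 := by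
    intro x y u v hxy huv hE
    obtain ⟨k, hk⟩ := (diffAt_iff x y).1 hxy
    by_contra h1
    have h0 : hammingDist u v ≠ 0 := by simpa [hammingDist_eq_zero] using huv
    have h2 : 1 < (Finset.univ.filter fun i => u i ≠ v i).card := by
      have : hammingDist u v = (Finset.univ.filter fun i => u i ≠ v i).card := rfl
      omega
    obtain ⟨a, ha, b, hb, hab⟩ := Finset.one_lt_card.1 h2
    simp only [Finset.mem_filter, Finset.mem_univ, true_and] at ha hb
    have := Ncount_lt hβ f hf u v a b (Ne.symm hab) ha hb
    have h3 := Ncount_adj f (diffAt_update u a (v a) (Ne.symm ha)) hk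
    omega
  apply wreath_of_adj_s1 (by omega) g
  intro x y
  constructor
  · intro h
    refine key (g x) (g y) x y h ?_ (hN x y).symm
    rintro rfl
    simp at h
  · intro h
    refine key x y (g x) (g y) h ?_ (hN x y)
    intro e
    rw [g.injective e] at h
    simp at h


/-! ### Part III: the reproducing kernel of the code -/

theorem ite_eq_castHom (K : Type) [Field K] [CharP K 2] (a : ZMod 2) :
    (if a = 1 then (1 : K) else 0) = ZMod.castHom (dvd_refl 2) K a := by
  have h : ∀ a : ZMod 2, a = 0 ∨ a = 1 := by decide
  rcases h a with rfl | rfl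
  · simp
  · rw [if_pos rfl, map_one]

theorem odd_cast_one {n : ℕ} (hodd : Odd n) (K : Type) [Field K] [CharP K 2] : (n : K) = 1 := by
  obtain ⟨k, rfl⟩ := hodd
  have : (2 : K) = 0 := CharTwo.two_eq_zero
  push_cast
  rw [this]; ring

theorem addChar_map_sum {n m : ℕ} {K : Type} [Field K] (χ : AddChar (ZMod n) K)
    (v : Fin m → ZMod n) : χ (∑ k, v k) = ∏ k, χ (v k) := by
  have h : ∀ s : Finset (Fin m), χ (∑ k ∈ s, v k) = ∏ k ∈ s, χ (v k) := by
    intro s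
    induction s using Finset.induction_on with
    | empty => simp
    | insert a s ha ih => rw [Finset.sum_insert ha, Finset.prod_insert ha,
        AddChar.map_add_eq_mul, ih]
  exact h _

theorem sum_char_one {n : ℕ} [NeZero n] (hodd : Odd n) {K : Type} [Field K] [CharP K 2]
    (χ : AddChar (ZMod n) K) (hχ : χ.IsPrimitive) (t : ZMod n) :
    ∑ c : ZMod n, χ (c * t) = if t = 0 then 1 else 0 := by
  rw [AddChar.sum_mulShift t hχ, ZMod.card]
  split_ifs <;> simp [odd_cast_one hodd K]

theorem sum_char {n m : ℕ} [NeZero n] (hodd : Odd n) {K : Type} [Field K] [CharP K 2]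
    (χ : AddChar (ZMod n) K) (hχ : χ.IsPrimitive) (t : Fin m → ZMod n) :
    ∑ y : Fin m → ZMod n, χ (y ⬝ᵥ t) = if t = 0 then 1 else 0 := by
  have h1 : ∀ y : Fin m → ZMod n, χ (y ⬝ᵥ t) = ∏ k, χ (y k * t k) := by
    intro y
    rw [dotProduct, addChar_map_sum]
  simp only [h1]
  have h2 := (Finset.prod_univ_sum (fun _ : Fin m => (Finset.univ : Finset (ZMod n)))
    (fun k c => χ (c * t k)))
  rw [Fintype.piFinset_univ] at h2
  rw [← h2]
  simp only [sum_char_one hodd χ hχ]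
  by_cases ht : t = 0
  · simp [ht]
  · rw [if_neg ht]
    obtain ⟨k, hk⟩ := Function.ne_iff.1 ht
    apply Finset.prod_eq_zero (Finset.mem_univ k)
    exact if_neg hk

open Polynomial in
theorem gen_poly {n m : ℕ} [NeZero n] (hodd : Odd n) {K : Type} [Field K] [CharP K 2]
    (χ : AddChar (ZMod n) K) (hχ : χ.IsPrimitive) (t : Fin m → ZMod n) :
    ∑ j : Fin m → ZMod n, (X : K[X]) ^ (hammingNorm j) * C (χ (j ⬝ᵥ t))
      = (1 + X) ^ (hammingNorm t) := by
  have hpow : ∀ (p : K[X]) (j : Fin m → ZMod n),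
      p ^ (hammingNorm j) = ∏ k, (if j k = 0 then 1 else p) := by
    intro p j
    rw [Finset.prod_ite]
    simp [hammingNorm]
  have h1 : ∀ j : Fin m → ZMod n, (X : K[X]) ^ (hammingNorm j) * C (χ (j ⬝ᵥ t))
      = ∏ k, ((if j k = 0 then 1 else X) * C (χ (j k * t k))) := by
    intro y
    rw [dotProduct, addChar_map_sum, hpow, Finset.prod_mul_distrib, map_prod]
  simp only [h1]
  have h2 := (Finset.prod_univ_sum (fun _ : Fin m => (Finset.univ : Finset (ZMod n)))
    (fun k c => (if c = 0 then 1 else (X : K[X])) * C (χ (c * t k))))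
  rw [Fintype.piFinset_univ] at h2
  rw [← h2, hpow]
  apply Finset.prod_congr rfl
  intro k _
  have h3 : ∀ c : ZMod n, (if c = 0 then 1 else (X : K[X])) * C (χ (c * t k))
      = X * C (χ (c * t k)) + if c = 0 then 1 - X else 0 := by
    intro c
    split_ifs with h
    · simp [h]
    · simp
  simp only [h3, Finset.sum_add_distrib, ← Finset.mul_sum, ← map_sum, sum_char_one hodd χ hχ]
  have h2 : (2 : K[X]) = 0 := by
    have : (2 : K) = 0 := CharTwo.two_eq_zero
    rw [← C_ofNat, this, C_0]
  by_cases ht : t k = 0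
  · simp [ht]
  · simp [ht]
    linear_combination (-X) * h2

theorem sum_weight {n m : ℕ} [NeZero n] (hodd : Odd n) {K : Type} [Field K] [CharP K 2]
    (χ : AddChar (ZMod n) K) (hχ : χ.IsPrimitive) (t : Fin m → ZMod n) (w : ℕ) :
    ∑ j : Fin m → ZMod n, (if w = hammingNorm j then χ (j ⬝ᵥ t) else 0)
      = ((hammingNorm t).choose w : K) := by
  have := congrArg (fun p => Polynomial.coeff p w) (gen_poly hodd χ hχ t)
  simp only [Polynomial.finsetSum_coeff, Polynomial.coeff_mul_C, Polynomial.coeff_X_pow,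
    Polynomial.coeff_one_add_X_pow] at this
  rw [← this]
  apply Finset.sum_congr rfl
  intro j _
  split_ifs <;> simp

open Classical in
/-- The kernel colouring of distances. -/
noncomputable def colour (m : ℕ) (W : Set ℕ) (d : ℕ) : ZMod 2 :=
  ∑ w ∈ Finset.range (m + 1), if w ∈ W then ((d.choose w : ℕ) : ZMod 2) else 0

open Classical in
theorem colour_cast {n m : ℕ} [NeZero n] (hodd : Odd n) {K : Type} [Field K] [CharP K 2]
    (χ : AddChar (ZMod n) K) (hχ : χ.IsPrimitive) (W : Set ℕ) (t : Fin m → ZMod n) :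
    ZMod.castHom (dvd_refl 2) K (colour m W (hammingNorm t))
      = ∑ j : Fin m → ZMod n, if hammingNorm j ∈ W then χ (j ⬝ᵥ t) else 0 := by
  unfold colour
  rw [map_sum]
  have h1 : ∀ w, ZMod.castHom (dvd_refl 2) K
      (if w ∈ W then (((hammingNorm t).choose w : ℕ) : ZMod 2) else 0)
      = ∑ j : Fin m → ZMod n, if w = hammingNorm j then
          (if hammingNorm j ∈ W then χ (j ⬝ᵥ t) else 0) else 0 := by
    intro w
    by_cases hw : w ∈ W
    · rw [if_pos hw, map_natCast, ← sum_weight hodd χ hχ t w]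
      apply Finset.sum_congr rfl
      intro j _
      split_ifs with h1 h2 <;> first | rfl | (exfalso; exact h2 (h1 ▸ hw))
    · rw [if_neg hw, map_zero]
      symm
      apply Finset.sum_eq_zero
      intro j _
      split_ifs with h1 h2 <;> first | rfl | (exfalso; exact hw (h1 ▸ h2))
  simp only [h1]
  rw [Finset.sum_comm]
  apply Finset.sum_congr rfl
  intro j _
  have : hammingNorm j ∈ Finset.range (m + 1) := by
    have := hammingNorm_le_card_fintype (x := j)
    simp at this ⊢
    omega
  rw [Finset.sum_ite_eq_of_mem' _ _ _ this]

theorem mem_code_iff {n m : ℕ} [NeZero n] (W : Set ℕ)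
    (K : Type) [Field K] [CharP K 2] (α : K) (hα : IsPrimitiveRoot α n)
    (a : (Fin m → ZMod n) → ZMod 2) :
    a ∈ abelianCode n m W K α ↔ ∀ j : Fin m → ZMod n, hammingNorm j ∉ W →
      ∑ i : Fin m → ZMod n, ZMod.castHom (dvd_refl 2) K (a i) *
        AddChar.zmodChar n hα.pow_eq_one (i ⬝ᵥ j) = 0 := by
  unfold abelianCode
  simp only [Set.mem_ofPred_eq, ite_eq_castHom, AddChar.zmodChar_apply]
  rfl

theorem hammingDist_eq_sub {n m : ℕ} (x y : Fin m → ZMod n) :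
    hammingDist x y = hammingNorm (x - y) := by
  rw [hammingDist_comm, hammingDist_eq_hammingNorm, neg_add_eq_sub]

theorem kernel_mem {n m : ℕ} [NeZero n] (hodd : Odd n) (W : Set ℕ)
    (K : Type) [Field K] [CharP K 2] (α : K) (hα : IsPrimitiveRoot α n) (x : Fin m → ZMod n) :
    (fun y => colour m W (hammingDist x y)) ∈ abelianCode n m W K α := by
  classical
  rw [mem_code_iff W K α hα]
  intro j hj
  set χ := AddChar.zmodChar n hα.pow_eq_one with hχdef
  have hχ : χ.IsPrimitive := AddChar.zmodChar_primitive_of_primitive_root n hα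
  simp only [hammingDist_eq_sub, colour_cast hodd χ hχ, Finset.sum_mul]
  rw [Finset.sum_comm]
  apply Finset.sum_eq_zero
  intro l _
  by_cases hl : hammingNorm l ∈ W
  · simp only [if_pos hl]
    have h1 : ∀ y : Fin m → ZMod n, χ (l ⬝ᵥ (x - y)) * χ (y ⬝ᵥ j)
        = χ (l ⬝ᵥ x) * χ (y ⬝ᵥ (j - l)) := by
      intro y
      rw [← AddChar.map_add_eq_mul, ← AddChar.map_add_eq_mul, dotProduct_sub, dotProduct_sub,
        dotProduct_comm y l]
      congr 1; ring
    simp only [h1, ← Finset.mul_sum, sum_char hodd χ hχ]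
    rw [if_neg, mul_zero]
    intro e
    rw [sub_eq_zero] at e
    exact hj (e ▸ hl)
  · simp [hl]

theorem kernel_repro {n m : ℕ} [NeZero n] (hodd : Odd n) (W : Set ℕ)
    (K : Type) [Field K] [CharP K 2] (α : K) (hα : IsPrimitiveRoot α n)
    (a : (Fin m → ZMod n) → ZMod 2) (ha : a ∈ abelianCode n m W K α) (x : Fin m → ZMod n) :
    ∑ y, colour m W (hammingDist x y) * a y = a x := by
  classical
  rw [mem_code_iff W K α hα] at ha
  set χ := AddChar.zmodChar n hα.pow_eq_one with hχdef
  have hχ : χ.IsPrimitive := AddChar.zmodChar_primitive_of_primitive_root n hα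
  apply (ZMod.castHom (dvd_refl 2) K).injective
  rw [map_sum]
  simp only [map_mul, hammingDist_comm x, hammingDist_eq_sub, colour_cast hodd χ hχ,
    Finset.sum_mul]
  rw [Finset.sum_comm]
  have h1 : ∀ j : Fin m → ZMod n,
      ∑ y, (if hammingNorm j ∈ W then χ (j ⬝ᵥ (y - x)) else 0) * ZMod.castHom (dvd_refl 2) K (a y)
      = ∑ y, χ (j ⬝ᵥ (y - x)) * ZMod.castHom (dvd_refl 2) K (a y) := by
    intro j
    by_cases hj : hammingNorm j ∈ W
    · simp only [if_pos hj]
    · simp only [if_neg hj, zero_mul, Finset.sum_const_zero]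
      have h2 : ∀ y : Fin m → ZMod n, χ (j ⬝ᵥ (y - x)) * ZMod.castHom (dvd_refl 2) K (a y)
          = χ (- (j ⬝ᵥ x)) * (ZMod.castHom (dvd_refl 2) K (a y) * χ (y ⬝ᵥ j)) := by
        intro y
        rw [dotProduct_sub, sub_eq_add_neg, AddChar.map_add_eq_mul, dotProduct_comm y j]
        ring
      simp only [h2, ← Finset.mul_sum, ha j hj, mul_zero]
  simp only [h1]
  rw [Finset.sum_comm]
  simp only [← Finset.sum_mul, sum_char hodd χ hχ]
  simp [sub_eq_zero]

theorem mem_of_repro {n m : ℕ} [NeZero n] (hodd : Odd n) (W : Set ℕ)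
    (K : Type) [Field K] [CharP K 2] (α : K) (hα : IsPrimitiveRoot α n)
    (a : (Fin m → ZMod n) → ZMod 2)
    (ha : ∀ x, ∑ y, colour m W (hammingDist x y) * a y = a x) :
    a ∈ abelianCode n m W K α := by
  rw [mem_code_iff W K α hα]
  intro j hj
  have hk : ∀ y : Fin m → ZMod n, _ :=
    fun y => (mem_code_iff W K α hα _).1 (kernel_mem hodd W K α hα y) j hj
  have hsub : ∀ x, ZMod.castHom (dvd_refl 2) K (a x)
      = ∑ y, ZMod.castHom (dvd_refl 2) K (colour m W (hammingDist x y))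
        * ZMod.castHom (dvd_refl 2) K (a y) := by
    intro x
    conv_lhs => rw [← ha x]
    simp only [map_sum, map_mul]
  have hrw : ∀ i : Fin m → ZMod n, ZMod.castHom (dvd_refl 2) K (a i) *
        AddChar.zmodChar n hα.pow_eq_one (i ⬝ᵥ j)
      = ∑ y, ZMod.castHom (dvd_refl 2) K (colour m W (hammingDist i y))
        * ZMod.castHom (dvd_refl 2) K (a y) * AddChar.zmodChar n hα.pow_eq_one (i ⬝ᵥ j) := by
    intro i
    rw [hsub i, Finset.sum_mul]
  rw [Finset.sum_congr rfl (fun i _ => hrw i)]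
  rw [Finset.sum_comm]
  apply Finset.sum_eq_zero
  intro y _
  have h2 := congrArg (fun t => ZMod.castHom (dvd_refl 2) K (a y) * t) (hk y)
  simp only [mul_zero, Finset.mul_sum] at h2
  rw [← h2]
  apply Finset.sum_congr rfl
  intro i _
  rw [hammingDist_comm y i]
  ring

theorem aut_iff {n m : ℕ} [NeZero n] (hodd : Odd n) (W : Set ℕ)
    (K : Type) [Field K] [CharP K 2] (α : K) (hα : IsPrimitiveRoot α n)
    (g : Equiv.Perm (Fin m → ZMod n)) :
    g ∈ codeAut (abelianCode n m W K α) ↔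
      ∀ x y, colour m W (hammingDist (g x) (g y)) = colour m W (hammingDist x y) := by
  constructor
  · intro hg x y
    have hg' : (fun c => c ∘ ⇑g.symm) '' (abelianCode n m W K α) = abelianCode n m W K α := hg
    have hfwd : ∀ c ∈ abelianCode n m W K α, c ∘ ⇑g.symm ∈ abelianCode n m W K α := by
      intro c hc
      rw [← hg']
      exact ⟨c, hc, rfl⟩
    have hbwd : ∀ c ∈ abelianCode n m W K α, c ∘ ⇑g ∈ abelianCode n m W K α := by
      intro c hc
      rw [← hg'] at hc
      obtain ⟨c', hc', rfl⟩ := hc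
      have : ((fun c => c ∘ ⇑g.symm) c') ∘ ⇑g = c' := by
        funext z; simp
      rw [this]; exact hc'
    have hq := hbwd _ (kernel_mem hodd W K α hα (g x))
    have h1 := kernel_repro hodd W K α hα _ hq y
    have h2 := kernel_repro hodd W K α hα _ (hfwd _ (kernel_mem hodd W K α hα y)) (g x)
    rw [← Equiv.sum_comp g] at h2
    simp only [Function.comp_apply, Equiv.symm_apply_apply] at h1 h2
    rw [← h1, hammingDist_comm x y, ← h2]
    apply Finset.sum_congr rfl
    intro z _
    ring
  · intro h
    show (fun c => c ∘ ⇑g.symm) '' (abelianCode n m W K α) = abelianCode n m W K α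
    have h' : ∀ x y, colour m W (hammingDist x (g y)) = colour m W (hammingDist (g.symm x) y) := by
      intro x y
      rw [← h (g.symm x) y]; simp
    apply Set.Subset.antisymm
    · rintro _ ⟨c, hc, rfl⟩
      apply mem_of_repro hodd W K α hα
      intro x
      rw [← Equiv.sum_comp g]
      simp only [Function.comp_apply, Equiv.symm_apply_apply, h']
      exact kernel_repro hodd W K α hα c hc (g.symm x)
    · intro c hc
      refine ⟨c ∘ ⇑g, ?_, ?_⟩
      · apply mem_of_repro hodd W K α hα
        intro x
        simp only [Function.comp_apply]
        have h3 := kernel_repro hodd W K α hα c hc (g x)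
        rw [← Equiv.sum_comp g] at h3
        simpa only [h] using h3
      · funext z; simp

/-! ### Part IV: boundary cases and conclusion -/

theorem triangular_zero (m : ℕ) (ω : ℕ → ZMod 2)
    (h : ∀ d, d ≤ m → ∑ w ∈ Finset.range (m + 1), ω w * ((d.choose w : ℕ) : ZMod 2) = 0) :
    ∀ d, d ≤ m → ω d = 0 := by
  intro d
  induction d using Nat.strong_induction_on with
  | _ d ih =>
    intro hd
    have h1 := h d hd
    rw [Finset.sum_eq_single_of_mem d (by simp; omega)] at h1
    · simpa using h1
    · intro w _ hw
      rcases lt_or_gt_of_ne hw with h2 | h2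
      · rw [ih w h2 (by omega), zero_mul]
      · rw [Nat.choose_eq_zero_of_lt h2]; simp

theorem sum_choose_pos {m d : ℕ} (hd : d ≤ m) (hd1 : 1 ≤ d) :
    ∑ w ∈ Finset.range (m + 1), ((d.choose w : ℕ) : ZMod 2) = 0 := by
  have h1 : ∑ w ∈ Finset.range (m + 1), d.choose w = 2 ^ d := by
    rw [← Nat.sum_range_choose]
    symm
    apply Finset.sum_subset
    · intro w; simp; omega
    · intro w _ hw
      apply Nat.choose_eq_zero_of_lt
      simp at hw; omega
  rw [← Nat.cast_sum, h1]
  push_cast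
  rw [show (2 : ZMod 2) = 0 from rfl, zero_pow (by omega)]

open Classical in
theorem colour_eq (m : ℕ) (W : Set ℕ) (d : ℕ) : colour m W d =
    ∑ w ∈ Finset.range (m + 1), (if w ∈ W then (1 : ZMod 2) else 0) * ((d.choose w : ℕ) : ZMod 2) := by
  unfold colour
  apply Finset.sum_congr rfl
  intro w _
  split_ifs <;> simp

open Classical in
/-- the colour when membership of `W` is constant on positive weights -/
theorem sum_two_level (m : ℕ) (a ε : ZMod 2) (d : ℕ) (hd : d ≤ m) :
    ∑ w ∈ Finset.range (m + 1), (if w = 0 then a else ε) * ((d.choose w : ℕ) : ZMod 2)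
      = if d = 0 then a else a + ε := by
  have h1 : ∀ w : ℕ, (if w = 0 then a else ε) * ((d.choose w : ℕ) : ZMod 2)
      = ε * ((d.choose w : ℕ) : ZMod 2) + if w = 0 then a - ε else 0 := by
    intro w
    split_ifs with h
    · subst h; simp
    · simp
  simp only [h1, Finset.sum_add_distrib, ← Finset.mul_sum]
  have hs : ∑ w ∈ Finset.range (m + 1), (if w = 0 then a - ε else 0) = a - ε := by
    rw [Finset.sum_ite_eq_of_mem']
    simp
  rw [hs]
  have h2 : -ε = ε := ZMod.neg_eq_self_mod_two ε
  split_ifs with h0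
  · subst h0
    rw [Finset.sum_eq_single_of_mem 0 (by simp)]
    · simp
    · intro w _ hw
      rw [Nat.choose_eq_zero_of_lt (by omega)]; simp
  · rw [sum_choose_pos hd (by omega), mul_zero, zero_add, sub_eq_add_neg, h2]

theorem boundary_colour (m : ℕ) (W : Set ℕ) (hB : BoundaryW m W) (d : ℕ) (hd1 : 1 ≤ d)
    (hd : d ≤ m) : colour m W d = colour m W m := by
  classical
  have main : ∀ a ε : ZMod 2, (∀ w, w ≤ m → (if w ∈ W then (1 : ZMod 2) else 0)
      = if w = 0 then a else ε) → colour m W d = colour m W m := by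
    intro a ε h
    have h2 : ∀ d, colour m W d
        = ∑ w ∈ Finset.range (m + 1), (if w = 0 then a else ε) * ((d.choose w : ℕ) : ZMod 2) := by
      intro d
      rw [colour_eq]
      apply Finset.sum_congr rfl
      intro w hw
      rw [h w (by simp at hw; omega)]
    rw [h2, h2, sum_two_level m a ε d hd, sum_two_level m a ε m le_rfl, if_neg (by omega),
      if_neg (by omega)]
  rcases hB with rfl | rfl | rfl | rfl
  · exact main 0 0 (by intro w hw; simp)
  · exact main 1 0 (by intro w hw; simp)
  · refine main 0 1 ?_
    intro w hw
    by_cases h0 : w = 0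
    · simp [h0]
    · rw [if_pos (by simp; omega), if_neg h0]
  · refine main 1 1 ?_
    intro w hw
    simp [hw]

theorem nonboundary_colour (m : ℕ) (W : Set ℕ) (hW : W ⊆ Set.Iic m)
    (hB : ¬ BoundaryW m W) : ∃ d, 1 ≤ d ∧ d ≤ m ∧ colour m W d ≠ colour m W m := by
  classical
  by_contra hcon
  push Not at hcon
  apply hB
  set a : ZMod 2 := if 0 ∈ W then 1 else 0 with ha
  have h0 : colour m W 0 = a := by
    rw [colour_eq, Finset.sum_eq_single_of_mem 0 (by simp)]
    · simp [ha]
    · intro w _ hw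
      rw [Nat.choose_eq_zero_of_lt (by omega)]; simp
  set ε : ZMod 2 := colour m W m - a with hε
  have hz := triangular_zero m
    (fun w => (if w ∈ W then (1 : ZMod 2) else 0) - if w = 0 then a else ε) (by
      intro d hd
      simp only [sub_mul, Finset.sum_sub_distrib]
      rw [sum_two_level m a ε d hd, ← colour_eq]
      split_ifs with hd0
      · rw [hd0, h0, sub_self]
      · rw [hcon d (by omega) hd, hε]; ring)
  have hpos : ∀ w, 1 ≤ w → w ≤ m → (if w ∈ W then (1 : ZMod 2) else 0) = ε := by
    intro w h1 h2
    have := hz w h2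
    simp only [if_neg (show w ≠ 0 by omega)] at this
    exact sub_eq_zero.1 this
  have hε2 : ε = 0 ∨ ε = 1 := by
    have h : ∀ a : ZMod 2, a = 0 ∨ a = 1 := by decide
    exact h ε
  have hmem : ∀ w ∈ W, w ≤ m := fun w hw => hW hw
  rcases hε2 with he | he
  · have hno : ∀ w, 1 ≤ w → w ∉ W := by
      intro w h1 hw
      have := hpos w h1 (hmem w hw)
      rw [if_pos hw, he] at this
      exact one_ne_zero this
    by_cases hw0 : 0 ∈ W
    · right; left
      ext w
      constructor
      · intro hw
        by_contra h
        have : w ≠ 0 := h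
        exact hno w (by omega) hw
      · intro hw
        have : w = 0 := hw
        rw [this]; exact hw0
    · left
      ext w
      simp only [Set.mem_empty_iff_false, iff_false]
      intro hw
      by_cases h : w = 0
      · exact hw0 (h ▸ hw)
      · exact hno w (by omega) hw
  · have hyes : ∀ w, 1 ≤ w → w ≤ m → w ∈ W := by
      intro w h1 h2
      by_contra hw
      have := hpos w h1 h2
      rw [if_neg hw, he] at this
      exact zero_ne_one this
    by_cases hw0 : 0 ∈ W
    · right; right; right
      ext w
      constructor
      · exact fun hw => hW hw
      · intro hw
        by_cases h : w = 0
        · rw [h]; exact hw0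
        · exact hyes w (by omega) hw
    · right; right; left
      ext w
      constructor
      · intro hw
        refine ⟨?_, hmem w hw⟩
        by_contra h
        exact hw0 ((show w = 0 by omega) ▸ hw)
      · intro hw
        exact hyes w hw.1 hw.2


/-- For odd `n ≥ 5`, `m ≥ 1` and `W ⊆ {0, 1, …, m}` not a boundary case,
the automorphism group of the abelian code `C(n, m, W)` is the wreath product `S_n ≀ S_m`
in its product action on `Z_n^m`; in the boundary cases it is the full symmetric group. -/
theorem statement1 (n m : ℕ) [NeZero n] (hn : 5 ≤ n) (hodd : Odd n) (hm : 1 ≤ m)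
    (W : Set ℕ) (hW : W ⊆ Set.Iic m)
    (K : Type) [Field K] [CharP K 2] (α : K) (hα : IsPrimitiveRoot α n) :
    (¬ BoundaryW m W → codeAut (abelianCode n m W K α) = wreathPermSet (ZMod n) m) ∧
    (BoundaryW m W → codeAut (abelianCode n m W K α) = Set.univ) := by

  constructor
  · intro hB
    ext g
    rw [aut_iff hodd W K α hα]
    constructor
    · intro h
      exact wreath_of_colour (by rw [ZMod.card]; exact hn) (colour m W)
        (nonboundary_colour m W hW hB) g h
    · intro h x y
      rw [wreath_isometry g h]
  · intro hB
    ext g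
    rw [aut_iff hodd W K α hα]
    simp only [Set.mem_univ, iff_true]
    intro x y
    by_cases hxy : x = y
    · simp [hxy]
    · have hpos : ∀ u v : Fin m → ZMod n, u ≠ v →
          colour m W (hammingDist u v) = colour m W m := by
        intro u v huv
        apply boundary_colour m W hB
        · exact Nat.one_le_iff_ne_zero.2 (by simpa [hammingDist_eq_zero] using huv)
        · simpa using hammingDist_le_card_fintype (x := u) (y := v)
      rw [hpos _ _ hxy, hpos _ _ (fun e => hxy (g.injective e))]
end
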